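/- arXiv:1907.06761 — 5 statements merged into one kernel-verified Lean document; each statement's English description precedes it below -/
import Mathlib

section
/- Suppose n is odd. For each integer k with 0 ≤ k ≤ (3n−1)/2, set m := (3n−1)/2 − k and x_k := (−1)^{m(m+1)/2} (λ^{(n−1)/2})^m ∈ ℂ. Then for all integers i, j with 0 ≤ i ≤ n and 0 ≤ j ≤ (n−1)/2: if i−j < n/2 then (−1)^{ij} x_{i+j} + (−1)^{i(j−1)} λ^j x_{n+i−j} = 0, and if i−j > n/2 then (−1)^{ij} x_{i+j} + (−1)^{i(j−1)} λ^i x_{2n+j−i} = 0. (This exhibits a nontrivial solution of the homogeneous linear system arising from products of orbit sums of degrees n and 2n in the skew polynomial ring.) -/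
noncomputable section

/-- `lam n = exp(2πi/n)`, a primitive `n`-th root of unity. -/
def lam (n : ℕ) : ℂ := Complex.exp (2 * (Real.pi : ℂ) * Complex.I / (n : ℂ))

/-- The candidate solution: with `m = (3n-1)/2 - k`,
`x_k = (-1)^(m(m+1)/2) (λ^((n-1)/2))^m`. -/
def xSol (n k : ℕ) : ℂ :=
  (-1 : ℂ) ^ (((3 * n - 1) / 2 - k) * ((3 * n - 1) / 2 - k + 1) / 2) *
    (lam n ^ ((n - 1) / 2)) ^ ((3 * n - 1) / 2 - k)

/-!
Let `m` run through all of `ℤ`. Then `x_k` is defined for every `k ∈ ℤ`, and both relations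
hold for all `i, j ∈ ℤ`. For `k = i + j` and `k = n + i - j` the exponents `m(m+1)/2` differ by
`(n - 2j)(n - i)`, which has the parity of `i + 1`, and the powers of `λ` differ by the factor
`λ^j` because `λ^n = 1`. The second relation is the first one reflected: `m ↦ -1 - m` preserves
`m(m+1)/2` and sends the index `n + i - j` to `2n + j - i`, so that
`x_(n+i-j) = λ^(i-j) x_(2n+j-i)`.
-/

/-- The triangular number `m(m+1)/2` at an arbitrary integer `m`, the exponent of the sign in
`x_k`; the division is exact. -/
def triangular (m : ℤ) : ℤ := m * (m + 1) / 2

lemma triangular_natCast (m : ℕ) : triangular m = (m * (m + 1) / 2 : ℕ) := by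
  simp [triangular]

lemma triangular_neg_one_sub (m : ℤ) : triangular (-1 - m) = triangular m := by
  rw [triangular, triangular, show (-1 - m) * (-1 - m + 1) = m * (m + 1) by ring]

lemma triangular_eq_add_of_sub_mul_eq {a b d : ℤ} (h : (a - b) * (a + b + 1) = 2 * d) :
    triangular a = triangular b + d := by
  rw [triangular, triangular, show a * (a + 1) = b * (b + 1) + d * 2 by linear_combination h,
    Int.add_mul_ediv_right _ _ two_ne_zero]

section CommGroup

variable {G : Type*} [CommGroup G]

lemma zpow_eq_zpow_of_dvd_sub {g : G} {n a b : ℤ} (hg : g ^ n = 1) (h : n ∣ a - b) :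
    g ^ a = g ^ b := by
  obtain ⟨c, hc⟩ := h
  rw [← sub_add_cancel a b, hc, zpow_add, zpow_mul, hg, one_zpow, one_mul]

variable [HasDistribNeg G]

lemma neg_one_zpow_eq_neg_of_odd_sub {a b : ℤ} (h : Odd (a - b)) : (-1 : G) ^ a = -(-1) ^ b := by
  have hdvd : 2 ∣ a - (b + 1) := by
    rw [← sub_sub]
    exact (h.sub_odd odd_one).two_dvd
  rw [zpow_eq_zpow_of_dvd_sub (by simp) hdvd, zpow_add_one, mul_neg_one]

/-- The vector `x_k` for an arbitrary index `k ∈ ℤ` and an arbitrary invertible `ζ` in place of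
`λ = exp(2πi/n)`. It is group-valued so that negative exponents make sense. -/
def intSol (ζ : G) (n k : ℤ) : G :=
  (-1) ^ triangular ((3 * n - 1) / 2 - k) * (ζ ^ ((n - 1) / 2)) ^ ((3 * n - 1) / 2 - k)

lemma intSol_two_mul_add_one (ζ : G) (p k : ℤ) :
    intSol ζ (2 * p + 1) k =
      (-1) ^ triangular (3 * p + 1 - k) * ζ ^ (p * (3 * p + 1 - k)) := by
  rw [intSol, show (3 * (2 * p + 1) - 1) / 2 = 3 * p + 1 by lia,
    show (2 * p + 1 - 1) / 2 = p by lia, zpow_mul]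

lemma intSol_reflect {ζ : G} {n : ℤ} (hn : Odd n) (hζ : ζ ^ n = 1) (c : ℤ) :
    intSol ζ n (n + c) = ζ ^ c * intSol ζ n (2 * n - c) := by
  obtain ⟨p, rfl⟩ := hn
  have htriangular : triangular (3 * p + 1 - (2 * p + 1 + c)) =
      triangular (3 * p + 1 - (2 * (2 * p + 1) - c)) := by
    rw [← triangular_neg_one_sub]
    ring_nf
  have hpow : ζ ^ (p * (3 * p + 1 - (2 * p + 1 + c))) =
      ζ ^ (c + p * (3 * p + 1 - (2 * (2 * p + 1) - c))) :=
    zpow_eq_zpow_of_dvd_sub hζ ⟨p - c, by ring⟩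
  rw [intSol_two_mul_add_one, intSol_two_mul_add_one, htriangular, hpow, zpow_add, mul_left_comm]

lemma intSol_add_eq_neg {ζ : G} {n : ℤ} (hn : Odd n) (hζ : ζ ^ n = 1) (i j : ℤ) :
    intSol ζ n (i + j) = -((-1) ^ i * ζ ^ j * intSol ζ n (n + i - j)) := by
  obtain ⟨p, rfl⟩ := hn
  have htriangular : triangular (3 * p + 1 - (i + j)) =
      triangular (3 * p + 1 - (2 * p + 1 + i - j)) +
        (2 * p + 1 - 2 * j) * (2 * p + 1 - i) :=
    triangular_eq_add_of_sub_mul_eq (by ring)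
  have hsign : (-1 : G) ^ ((2 * p + 1 - 2 * j) * (2 * p + 1 - i)) = -(-1) ^ i :=
    neg_one_zpow_eq_neg_of_odd_sub ⟨(p - j) * (2 * p + 1 - i) + p - i, by ring⟩
  have hpow : ζ ^ (p * (3 * p + 1 - (i + j))) =
      ζ ^ (j + p * (3 * p + 1 - (2 * p + 1 + i - j))) :=
    zpow_eq_zpow_of_dvd_sub hζ ⟨p - j, by ring⟩
  rw [intSol_two_mul_add_one, intSol_two_mul_add_one, htriangular, add_comm (triangular _),
    zpow_add, hsign, hpow, zpow_add, neg_mul, neg_mul, mul_mul_mul_comm]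

end CommGroup

theorem xSol_solves_system_general {R : Type*} [CommRing R] {ζ : Rˣ} {n : ℤ} (hn : Odd n)
    (hζ : ζ ^ n = 1) (i j : ℤ) :
    (((-1) ^ (i * j) * intSol ζ n (i + j) : Rˣ) : R) +
        ((-1) ^ (i * (j + 1)) * ζ ^ j * intSol ζ n (n + i - j) : Rˣ) = 0 ∧
      (((-1) ^ (i * j) * intSol ζ n (i + j) : Rˣ) : R) +
        ((-1) ^ (i * (j + 1)) * ζ ^ i * intSol ζ n (2 * n + j - i) : Rˣ) = 0 := by
  have hreflect : ζ ^ j * intSol ζ n (n + i - j) = ζ ^ i * intSol ζ n (2 * n + j - i) := by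
    rw [add_sub_assoc, intSol_reflect hn hζ, ← mul_assoc, ← zpow_add, add_sub_cancel,
      ← sub_add, sub_add_eq_add_sub]
  have hfirst : (-1) ^ (i * j) * intSol ζ n (i + j) =
      -((-1) ^ (i * (j + 1)) * ζ ^ j * intSol ζ n (n + i - j)) := by
    rw [intSol_add_eq_neg hn hζ, mul_add_one, zpow_add, mul_neg]
    simp only [mul_assoc]
  constructor
  · rw [hfirst, Units.val_neg, neg_add_cancel]
  · rw [hfirst, mul_assoc, mul_assoc, hreflect, Units.val_neg, neg_add_cancel]

/-- `lam n` as an element of the group `ℂˣ`, where integer powers obey the group laws. -/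
def lamUnit (n : ℕ) : ℂˣ := Units.mk0 (lam n) (Complex.exp_ne_zero _)

lemma val_lamUnit (n : ℕ) : (lamUnit n : ℂ) = lam n := rfl

lemma lamUnit_zpow_self {n : ℕ} (hn : n ≠ 0) : lamUnit n ^ (n : ℤ) = 1 := by
  rw [zpow_natCast, Units.ext_iff, Units.val_pow_eq_pow_val]
  exact (Complex.isPrimitiveRoot_exp n hn).pow_eq_one

lemma xSol_eq_intSol {n k : ℕ} {l : ℤ} (hn : n ≠ 0) (hk : k ≤ (3 * n - 1) / 2) (hl : k = l) :
    xSol n k = intSol (lamUnit n) n l := by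
  have hm : (3 * (n : ℤ) - 1) / 2 - l = ((3 * n - 1) / 2 - k : ℕ) := by lia
  have hp : ((n : ℤ) - 1) / 2 = ((n - 1) / 2 : ℕ) := by lia
  rw [intSol, hm, hp, triangular_natCast]
  simp only [zpow_natCast, Units.val_mul, Units.val_pow_eq_pow_val, Units.val_neg, Units.val_one,
    val_lamUnit, xSol]

/-- If `n` is odd, the vector `x_k` solves the homogeneous system arising from
products of orbit sums of degrees `n` and `2n`:
`0 = (-1)^(ij) x_(i+j) + (-1)^(i(j-1)) λ^j x_(n+i-j)` when `i - j < n/2`, and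
`0 = (-1)^(ij) x_(i+j) + (-1)^(i(j-1)) λ^i x_(2n+j-i)` when `i - j > n/2`
(for `0 ≤ i ≤ n`, `0 ≤ j ≤ (n-1)/2`; the sign `(-1)^(i(j-1))` is written as the
equal quantity `(-1)^(i(j+1))`, and the conditions on `i - j` are stated in `ℤ`). -/
theorem xSol_solves_system (n : ℕ) (hodd : Odd n) (i j : ℕ)
    (hi : i ≤ n) (hj : j ≤ (n - 1) / 2) :
    (2 * ((i : ℤ) - (j : ℤ)) < (n : ℤ) →
      (-1 : ℂ) ^ (i * j) * xSol n (i + j) +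
        (-1 : ℂ) ^ (i * (j + 1)) * lam n ^ j * xSol n (n + i - j) = 0) ∧
    (2 * ((i : ℤ) - (j : ℤ)) > (n : ℤ) →
      (-1 : ℂ) ^ (i * j) * xSol n (i + j) +
        (-1 : ℂ) ^ (i * (j + 1)) * lam n ^ i * xSol n (2 * n + j - i) = 0) := by
  have hn : n ≠ 0 := hodd.pos.ne'
  obtain ⟨hfirst, hsecond⟩ := xSol_solves_system_general (by exact_mod_cast hodd)
    (lamUnit_zpow_self hn) i j
  simp only [← Nat.cast_mul, ← Nat.cast_add_one, zpow_natCast, Units.val_mul,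
    Units.val_pow_eq_pow_val, Units.val_neg, Units.val_one, val_lamUnit] at hfirst hsecond
  constructor
  · intro h
    rwa [xSol_eq_intSol (l := i + j) hn (by lia) (by lia),
      xSol_eq_intSol (l := n + i - j) hn (by lia) (by lia)]
  · intro h
    rwa [xSol_eq_intSol (l := i + j) hn (by lia) (by lia),
      xSol_eq_intSol (l := 2 * n + j - i) hn (by lia) (by lia)]
end
end

section
/- Suppose n is even. Then the fixed subring A^G is generated as a ℂ-algebra by the orbit sums of degrees n and 2n; that is, A^G equals the ℂ-subalgebra of A generated by the set {O(a,b,c) : a, b, c ≥ 0, a+2b+c = n} ∪ {O(a,b,c) : a, b, c ≥ 0, a+2b+c = 2n}. (This is the bound β(g) ≤ |G| = 2n for the action on the down-up algebra A(0,1).) -/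
/-!
Setting: `lam n = exp(2πi/n)` is a primitive `n`-th root of unity in `ℂ`.
`DUAlg` is the graded down-up algebra `A(0,1) = ℂ⟨u,d⟩/(d²u - ud², du² - u²d)`,
with generators `uGen`, `dGen`.  The automorphism `g` (of order `2n`) is
determined by `g u = d`, `g d = lam n • u`, and generates the cyclic group `G`,
so that the fixed subring `A^G` is `{a | g a = a}`.  The orbit sum is
`orbitSum n a b c = u^a (du)^b d^c + (lam n)^(b+c) • (d^a (ud)^b u^c)`.
-/

noncomputable section

/-- The defining relations of the down-up algebra `A(0,1)`:
`d²u = ud²` and `du² = u²d` (here `0` plays the role of `u`, `1` of `d`). -/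
inductive DownUpRel : FreeAlgebra ℂ (Fin 2) → FreeAlgebra ℂ (Fin 2) → Prop
  | rel1 : DownUpRel (FreeAlgebra.ι ℂ 1 * FreeAlgebra.ι ℂ 1 * FreeAlgebra.ι ℂ 0)
      (FreeAlgebra.ι ℂ 0 * FreeAlgebra.ι ℂ 1 * FreeAlgebra.ι ℂ 1)
  | rel2 : DownUpRel (FreeAlgebra.ι ℂ 1 * FreeAlgebra.ι ℂ 0 * FreeAlgebra.ι ℂ 0)
      (FreeAlgebra.ι ℂ 0 * FreeAlgebra.ι ℂ 0 * FreeAlgebra.ι ℂ 1)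

/-- The graded down-up algebra `A(0,1)`. -/
abbrev DUAlg : Type := RingQuot DownUpRel

/-- The generator `u` of `A(0,1)`. -/
def uGen : DUAlg := RingQuot.mkAlgHom ℂ DownUpRel (FreeAlgebra.ι ℂ 0)

/-- The generator `d` of `A(0,1)`. -/
def dGen : DUAlg := RingQuot.mkAlgHom ℂ DownUpRel (FreeAlgebra.ι ℂ 1)

/-- Orbit sum `O(a,b,c) = u^a (du)^b d^c + λ^(b+c) d^a (ud)^b u^c`. -/
def orbitSum (n a b c : ℕ) : DUAlg :=
  uGen ^ a * (dGen * uGen) ^ b * dGen ^ c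
    + (lam n ^ (b + c)) • (dGen ^ a * (uGen * dGen) ^ b * uGen ^ c)

/-!
Let `V` be the span of `u` and `d`, so that `A` is the sum of the powers `V ^ k`. On `V ^ k` the
automorphism `g ^ 2` is multiplication by `λ ^ k`, so an element fixed by `g ^ 2` lies in the sum of
the `V ^ (n * k)`, and the elements fixed by `g` are the `x + g x` with `x` in that sum. Orbit sums
are the values of `x ↦ x + g x` on the monomials `u ^ a (du) ^ b d ^ c`, which span the powers of
`V`; hence it remains to reduce `x + g x` for `x ∈ V ^ (n * k)` to the cases `k = 1` and `k = 2`.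
As `u ^ 2` and `d ^ 2` are central and `ud` commutes with `du`, the elements of even powers of `V`
commute, and for `n` even the reduction is the classical polarization identity expressing the trace
of `x * y * z` through the traces of products of at most two of the factors.
-/

open scoped Pointwise

section Monomials

variable {M : Type*} [Monoid M] {u d : M}

/-- The monomial `u ^ a (du) ^ b d ^ c`. When `u` and `d` generate `A(0,1)` these form its
Poincaré–Birkhoff–Witt basis, where `u ^ a (du) ^ b d ^ c` has degree `a + 2 * b + c`. -/
def downUpMonomial (u d : M) (a b c : ℕ) : M := u ^ a * (d * u) ^ b * d ^ c

lemma pow_succ_mul_of_commute_sq (hu : Commute (u ^ 2) d) (b : ℕ) :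
    (d * u) ^ (b + 1) * u = u ^ 2 * (d * u) ^ b * d := by
  have h : SemiconjBy u (u * d) (d * u) := by
    rw [SemiconjBy, ← mul_assoc, ← sq, hu.eq, sq, mul_assoc]
  calc (d * u) ^ (b + 1) * u = u * (u * d) ^ (b + 1) := (h.pow_right (b + 1)).eq.symm
    _ = u * (u * ((d * u) ^ b * d)) := by rw [pow_succ', mul_assoc u d, ← mul_pow_mul]
    _ = u ^ 2 * (d * u) ^ b * d := by simp only [sq, mul_assoc]

lemma exists_downUpMonomial_eq_mul (hu : Commute (u ^ 2) d) (hd : Commute (d ^ 2) u)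
    (a b c : ℕ) : ∃ a' b' c', a' + 2 * b' + c' = a + 2 * b + c + 1 ∧
      downUpMonomial u d a' b' c' = downUpMonomial u d a b c * u := by
  have comm_even (k : ℕ) : Commute (d ^ (2 * k)) u := by
    rw [pow_mul]; exact hd.pow_left k
  obtain ⟨k, rfl | rfl⟩ := Nat.even_or_odd' c
  · rcases b with _ | b
    · refine ⟨a + 1, 0, 2 * k, by ring, ?_⟩
      simp only [downUpMonomial, pow_zero, mul_one]
      rw [mul_assoc, (comm_even k).eq, pow_succ, mul_assoc]
    · refine ⟨a + 2, b, 2 * k + 1, by ring, ?_⟩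
      calc u ^ (a + 2) * (d * u) ^ b * d ^ (2 * k + 1)
          = u ^ a * (u ^ 2 * (d * u) ^ b * d) * d ^ (2 * k) := by
            simp only [pow_add, pow_succ' d (2 * k), mul_assoc]
        _ = u ^ a * (d * u) ^ (b + 1) * (u * d ^ (2 * k)) := by
            rw [← pow_succ_mul_of_commute_sq hu]; simp only [mul_assoc]
        _ = u ^ a * (d * u) ^ (b + 1) * d ^ (2 * k) * u := by
            rw [← (comm_even k).eq, ← mul_assoc]
  · refine ⟨a, b + 1, 2 * k, by ring, ?_⟩
    have comm_du : Commute (d ^ (2 * k)) (d * u) :=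
      ((Commute.refl d).pow_left _).mul_right (comm_even k)
    calc u ^ a * (d * u) ^ (b + 1) * d ^ (2 * k)
        = u ^ a * (d * u) ^ b * ((d * u) * d ^ (2 * k)) := by simp only [pow_succ, mul_assoc]
      _ = u ^ a * (d * u) ^ b * d ^ (2 * k + 1) * u := by
          rw [← comm_du.eq]; simp only [pow_succ, mul_assoc]

lemma exists_downUpMonomial_eq_of_mem_pow (hu : Commute (u ^ 2) d) (hd : Commute (d ^ 2) u)
    {k : ℕ} {w : M} (hw : w ∈ ({u, d} : Set M) ^ k) :
    ∃ a b c, a + 2 * b + c = k ∧ downUpMonomial u d a b c = w := by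
  induction k generalizing w with
  | zero => exact ⟨0, 0, 0, rfl, by simpa [downUpMonomial, eq_comm] using hw⟩
  | succ k ih =>
    rw [pow_succ] at hw
    obtain ⟨w, hw, x, hx, rfl⟩ := hw
    obtain ⟨a, b, c, rfl, rfl⟩ := ih hw
    rcases hx with rfl | rfl
    · exact exists_downUpMonomial_eq_mul hu hd a b c
    · exact ⟨a, b, c + 1, by ring, by simp only [downUpMonomial, pow_succ, mul_assoc]⟩

lemma downUpMonomial_mem_pow (u d : M) (a b c : ℕ) :
    downUpMonomial u d a b c ∈ ({u, d} : Set M) ^ (a + 2 * b + c) := by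
  have hu : u ∈ ({u, d} : Set M) := by simp
  have hd : d ∈ ({u, d} : Set M) := by simp
  rw [pow_add, pow_add, pow_mul, sq]
  exact Set.mul_mem_mul (Set.mul_mem_mul (Set.pow_mem_pow hu)
    (Set.pow_mem_pow (Set.mul_mem_mul hd hu))) (Set.pow_mem_pow hd)

lemma commute_sq_of_mem_pair_pow (hu : Commute (u ^ 2) d) {k : ℕ} {w : M}
    (hw : w ∈ ({u, d} : Set M) ^ k) : Commute (u ^ 2) w := by
  have hle : ({u, d} : Set M) ⊆ Submonoid.centralizer {u ^ 2} := by
    simp [Set.insert_subset_iff, Set.mem_centralizer_iff, hu.eq, ← pow_succ, ← pow_succ']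
  exact Submonoid.mem_centralizer_iff.mp (Submonoid.pow_subset hle hw) _ rfl

lemma commute_mul_mul_swap (hu : Commute (u ^ 2) d) (hd : Commute (d ^ 2) u) :
    Commute (u * d) (d * u) :=
  calc u * d * (d * u) = u * (d ^ 2 * u) := by simp only [sq, mul_assoc]
    _ = u ^ 2 * d * d := by rw [hd.eq]; simp only [sq, mul_assoc]
    _ = d * u * (u * d) := by rw [hu.eq]; simp only [sq, mul_assoc]

lemma commute_of_mem_pair_sq (hu : Commute (u ^ 2) d) (hd : Commute (d ^ 2) u) {x y : M}
    (hx : x ∈ ({u, d} : Set M) ^ 2) (hy : y ∈ ({u, d} : Set M) ^ 2) : Commute x y := by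
  have u_sq_comm {w : M} (hw : w ∈ ({u, d} : Set M) ^ 2) : Commute (u * u) w :=
    sq u ▸ commute_sq_of_mem_pair_pow hu hw
  have d_sq_comm {w : M} (hw : w ∈ ({u, d} : Set M) ^ 2) : Commute (d * d) w :=
    sq d ▸ commute_sq_of_mem_pair_pow hd (Set.pair_comm u d ▸ hw)
  have cases_sq {w : M} (hw : w ∈ ({u, d} : Set M) ^ 2) :
      w = u * u ∨ w = d * d ∨ w = u * d ∨ w = d * u := by
    rw [sq] at hw
    obtain ⟨a, rfl | rfl, b, rfl | rfl, rfl⟩ := hw <;> simp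
  rcases cases_sq hx with rfl | rfl | rfl | rfl
  · exact u_sq_comm hy
  · exact d_sq_comm hy
  all_goals rcases cases_sq hy with rfl | rfl | rfl | rfl
  · exact (u_sq_comm hx).symm
  · exact (d_sq_comm hx).symm
  · exact Commute.refl _
  · exact commute_mul_mul_swap hu hd
  · exact (u_sq_comm hx).symm
  · exact (d_sq_comm hx).symm
  · exact (commute_mul_mul_swap hu hd).symm
  · exact Commute.refl _

end Monomials

section SubmodulePowers

variable {R A : Type*} [CommSemiring R] [Semiring A] [Algebra R A]

lemma toSubmodule_adjoin_le_iSup_span_pow (s : Set A) :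
    Subalgebra.toSubmodule (Algebra.adjoin R s) ≤ ⨆ k : ℕ, Submodule.span R s ^ k := by
  have exists_mem_pow {w : A} (hw : w ∈ Submonoid.closure s) : ∃ k : ℕ, w ∈ s ^ k := by
    induction hw using Submonoid.closure_induction with
    | mem x hx => exact ⟨1, by rwa [pow_one]⟩
    | one => exact ⟨0, by simp⟩
    | mul x y _ _ hx hy =>
      obtain ⟨i, hi⟩ := hx
      obtain ⟨j, hj⟩ := hy
      exact ⟨i + j, pow_add s i j ▸ Set.mul_mem_mul hi hj⟩
  rw [Algebra.adjoin_eq_span, Submodule.span_le]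
  intro w hw
  obtain ⟨k, hk⟩ := exists_mem_pow hw
  refine Submodule.mem_iSup_of_mem k ?_
  rw [Submodule.span_pow]
  exact Submodule.subset_span hk

lemma map_eq_pow_smul_of_mem_pow {V : Submodule R A} {τ : A →ₐ[R] A} {r : R}
    (hV : ∀ x ∈ V, τ x = r • x) {k : ℕ} {x : A} (hx : x ∈ V ^ k) : τ x = r ^ k • x := by
  induction hx using Submodule.pow_induction_on_left' with
  | algebraMap s => simp
  | add x y k _ _ hx hy => rw [map_add, hx, hy, smul_add]
  | mem_mul x hx k y _ hy => rw [map_mul, hV x hx, hy, smul_mul_smul_comm, pow_succ']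

lemma map_mem_pow {V : Submodule R A} {σ : A →ₐ[R] A} (hV : ∀ x ∈ V, σ x ∈ V) {k : ℕ} {x : A}
    (hx : x ∈ V ^ k) : σ x ∈ V ^ k := by
  have hle : (V ^ k).map σ.toLinearMap ≤ V ^ k := by
    rw [Submodule.map_pow]
    exact pow_le_pow_left' (Submodule.map_le_iff_le_comap.mpr hV) k
  exact hle (Submodule.mem_map_of_mem hx)

lemma commute_of_mem_span_pow_even {s : Set A} (hs : ∀ x ∈ s ^ 2, ∀ y ∈ s ^ 2, Commute x y)
    {n : ℕ} (hn : Even n) {x y : A} (hx : x ∈ Submodule.span R s ^ n)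
    (hy : y ∈ Submodule.span R s ^ n) : Commute x y := by
  have hle : Submodule.span R s ^ n ≤ Subalgebra.toSubmodule (Algebra.adjoin R (s ^ 2)) := by
    obtain ⟨m, rfl⟩ := even_iff_exists_two_mul.mp hn
    rw [Submodule.span_pow, Submodule.span_le, pow_mul]
    exact Submonoid.pow_subset (S := (Algebra.adjoin R (s ^ 2)).toSubmonoid) Algebra.subset_adjoin
  refine Algebra.commute_of_mem_adjoin_of_forall_mem_commute (hle hy) fun b hb ↦ ?_
  exact (Algebra.commute_of_mem_adjoin_of_forall_mem_commute (hle hx) fun a ha ↦ hs b hb a ha).symm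

variable (R) in
lemma downUpMonomial_mem_span_pair_pow (u d : A) (a b c : ℕ) :
    downUpMonomial u d a b c ∈ Submodule.span R {u, d} ^ (a + 2 * b + c) := by
  rw [Submodule.span_pow]
  exact Submodule.subset_span (downUpMonomial_mem_pow u d a b c)

end SubmodulePowers

section TwistedSwap

variable {R A : Type*} [CommSemiring R] [Semiring A] [Algebra R A] {u d : A} {r : R}
  {σ : A →ₐ[R] A}

lemma map_mem_span_pair (hσu : σ u = d) (hσd : σ d = r • u) {x : A}
    (hx : x ∈ Submodule.span R {u, d}) : σ x ∈ Submodule.span R {u, d} := by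
  obtain ⟨p, q, rfl⟩ := Submodule.mem_span_pair.mp hx
  exact Submodule.mem_span_pair.mpr
    ⟨q * r, p, by simp only [map_add, map_smul, hσu, hσd, smul_smul, add_comm]⟩

lemma map_map_eq_pow_smul_of_mem_span_pair_pow (hσu : σ u = d) (hσd : σ d = r • u) {k : ℕ} {x : A}
    (hx : x ∈ Submodule.span R {u, d} ^ k) : σ (σ x) = r ^ k • x := by
  refine map_eq_pow_smul_of_mem_pow (τ := σ.comp σ) (fun y hy ↦ ?_) hx
  obtain ⟨p, q, rfl⟩ := Submodule.mem_span_pair.mp hy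
  simp only [AlgHom.comp_apply, map_add, map_smul, hσu, hσd, smul_add, smul_comm r]

end TwistedSwap

section PairTrace

variable {R A : Type*} [CommSemiring R] [Semiring A] [Algebra R A] (σ : A →ₐ[R] A)

/-- The map `x ↦ x + σ x`. On the elements fixed by `σ ^ 2`, where `σ` acts with order two, it is
the trace onto the elements fixed by `σ`. -/
def pairTrace : A →ₗ[R] A := LinearMap.id + σ.toLinearMap

lemma pairTrace_apply (x : A) : pairTrace σ x = x + σ x := rfl

variable {σ} {u d : A} {r : R}

lemma map_pairTrace_of_map_map_eq_self {x : A} (hx : σ (σ x) = x) :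
    σ (pairTrace σ x) = pairTrace σ x := by
  rw [pairTrace_apply, map_add, hx, add_comm]

lemma pairTrace_downUpMonomial (hσu : σ u = d) (hσd : σ d = r • u) (a b c : ℕ) :
    pairTrace σ (downUpMonomial u d a b c) =
      downUpMonomial u d a b c + r ^ (b + c) • downUpMonomial d u a b c := by
  simp only [pairTrace_apply, downUpMonomial, map_mul, map_pow, hσu, hσd, smul_pow,
    smul_mul_assoc, mul_smul_comm, smul_smul, ← pow_add, add_comm c b]

lemma map_pairTrace_downUpMonomial (hσu : σ u = d) (hσd : σ d = r • u) {a b c : ℕ}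
    (hr : r ^ (a + 2 * b + c) = 1) :
    σ (pairTrace σ (downUpMonomial u d a b c)) = pairTrace σ (downUpMonomial u d a b c) := by
  refine map_pairTrace_of_map_map_eq_self ?_
  rw [map_map_eq_pow_smul_of_mem_span_pair_pow hσu hσd
    (downUpMonomial_mem_span_pair_pow R u d a b c), hr, one_smul]

lemma pairTrace_mem_of_mem_span_pair_pow (hu : Commute (u ^ 2) d) (hd : Commute (d ^ 2) u)
    {B : Subalgebra R A} {k : ℕ}
    (hB : ∀ a b c, a + 2 * b + c = k → pairTrace σ (downUpMonomial u d a b c) ∈ B) {x : A}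
    (hx : x ∈ Submodule.span R {u, d} ^ k) : pairTrace σ x ∈ B := by
  have hle : Submodule.span R {u, d} ^ k ≤ (Subalgebra.toSubmodule B).comap (pairTrace σ) := by
    rw [Submodule.span_pow, Submodule.span_le]
    intro w hw
    obtain ⟨a, b, c, habc, rfl⟩ := exists_downUpMonomial_eq_of_mem_pow hu hd hw
    exact hB a b c habc
  exact hle hx

end PairTrace

section Polarization

variable {R A : Type*} [CommRing R] [Ring A] [Algebra R A] {σ : A →ₐ[R] A}

lemma two_smul_pairTrace_mul_mul (x : A) {y z : A} (hyz : Commute y z) (hσy : Commute (σ y) z)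
    (hσz : Commute y (σ z)) :
    (2 : R) • pairTrace σ (x * y * z) =
      pairTrace σ x * pairTrace σ (y * z) + pairTrace σ (x * z) * pairTrace σ y +
        pairTrace σ (x * y) * pairTrace σ z - pairTrace σ x * pairTrace σ y * pairTrace σ z := by
  have hσyz : Commute (σ y) (σ z) := hyz.map σ
  have xzy : x * z * y = x * y * z := by rw [mul_assoc, ← hyz.eq, mul_assoc]
  have xzσy : x * z * σ y = x * σ y * z := by rw [mul_assoc, ← hσy.eq, mul_assoc]
  have σxσzy : σ x * σ z * y = σ x * y * σ z := by rw [mul_assoc, ← hσz.eq, mul_assoc]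
  have σxσzσy : σ x * σ z * σ y = σ x * σ y * σ z := by rw [mul_assoc, ← hσyz.eq, mul_assoc]
  simp only [pairTrace_apply, map_mul, two_smul, add_mul, mul_add, xzy, xzσy, σxσzy, σxσzσy,
    ← mul_assoc]
  abel

theorem pairTrace_mem_of_mem_pow (h2 : IsUnit (2 : R)) {W : Submodule R A}
    (hσ : ∀ x ∈ W, σ x ∈ W) (hcomm : ∀ x ∈ W, ∀ y ∈ W, Commute x y) {B : Subalgebra R A}
    (hW : ∀ x ∈ W, pairTrace σ x ∈ B) (hW2 : ∀ x ∈ W ^ 2, pairTrace σ x ∈ B) (k : ℕ) {x : A}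
    (hx : x ∈ W ^ k) : pairTrace σ x ∈ B := by
  induction k using Nat.twoStepInduction generalizing x with
  | zero =>
    obtain ⟨r, rfl⟩ := Submodule.mem_one.mp (pow_zero W ▸ hx)
    rw [pairTrace_apply, AlgHom.commutes]
    exact add_mem (B.algebraMap_mem r) (B.algebraMap_mem r)
  | one => exact hW x (pow_one W ▸ hx)
  | more k ihk ihk1 =>
    rw [pow_succ, pow_succ] at hx
    have hle : W ^ k * W * W ≤ (Subalgebra.toSubmodule B).comap (pairTrace σ) := by
      refine Submodule.mul_le.mpr fun w hw z hz ↦ ?_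
      induction hw using Submodule.mul_induction_on' with
      | add w₁ _ w₂ _ h₁ h₂ => rw [add_mul]; exact add_mem h₁ h₂
      | mem_mul_mem x hx y hy =>
        have hxz : x * z ∈ W ^ (k + 1) := pow_succ W k ▸ Submodule.mul_mem_mul hx hz
        have hxy : x * y ∈ W ^ (k + 1) := pow_succ W k ▸ Submodule.mul_mem_mul hx hy
        have hyz : y * z ∈ W ^ 2 := sq W ▸ Submodule.mul_mem_mul hy hz
        have two_smul_mem : (2 : R) • pairTrace σ (x * y * z) ∈ B := by
          rw [two_smul_pairTrace_mul_mul x (hcomm y hy z hz) (hcomm _ (hσ y hy) z hz)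
            (hcomm y hy _ (hσ z hz))]
          exact sub_mem (add_mem (add_mem (mul_mem (ihk hx) (hW2 _ hyz))
            (mul_mem (ihk1 hxz) (hW y hy))) (mul_mem (ihk1 hxy) (hW z hz)))
            (mul_mem (mul_mem (ihk hx) (hW y hy)) (hW z hz))
        exact ((Subalgebra.toSubmodule B).smul_mem_iff_of_isUnit h2).mp two_smul_mem
    exact hle hx

lemma pairTrace_mem_of_mem_span_pair_pow_mul (h2 : IsUnit (2 : R)) {u d : A} {r : R}
    (hu : Commute (u ^ 2) d) (hd : Commute (d ^ 2) u) (hσu : σ u = d) (hσd : σ d = r • u)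
    {n : ℕ} (hne : Even n) {B : Subalgebra R A}
    (hB : ∀ a b c, a + 2 * b + c = n ∨ a + 2 * b + c = 2 * n →
      pairTrace σ (downUpMonomial u d a b c) ∈ B)
    (k : ℕ) {x : A} (hx : x ∈ Submodule.span R {u, d} ^ (n * k)) : pairTrace σ x ∈ B := by
  rw [pow_mul] at hx
  refine pairTrace_mem_of_mem_pow h2
    (fun y hy ↦ map_mem_pow (fun z ↦ map_mem_span_pair hσu hσd) hy)
    (fun y hy z hz ↦ ?_) (fun y hy ↦ ?_) (fun y hy ↦ ?_) k hx
  · have hsq : ∀ v ∈ ({u, d} : Set A) ^ 2, ∀ w ∈ ({u, d} : Set A) ^ 2, Commute v w :=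
      fun v hv w hw ↦ commute_of_mem_pair_sq hu hd hv hw
    exact commute_of_mem_span_pow_even hsq hne hy hz
  · exact pairTrace_mem_of_mem_span_pair_pow hu hd (fun a b c h ↦ hB a b c (.inl h)) hy
  · rw [← pow_mul, mul_comm] at hy
    exact pairTrace_mem_of_mem_span_pair_pow hu hd (fun a b c h ↦ hB a b c (.inr h)) hy

end Polarization

section Eigenspaces

lemma sum_pow_apply_of_apply_eq_smul {R M : Type*} [CommSemiring R] [AddCommMonoid M] [Module R M]
    {T : Module.End R M} {r : R} {x : M} (hx : T x = r • x) (n : ℕ) :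
    (∑ j ∈ Finset.range n, T ^ j) x = (∑ j ∈ Finset.range n, r ^ j) • x := by
  have pow_apply (j : ℕ) : (T ^ j) x = r ^ j • x := by
    induction j with
    | zero => simp
    | succ j ih => rw [pow_succ', Module.End.mul_apply, ih, map_smul, hx, smul_smul, pow_succ]
  rw [LinearMap.sum_apply, Finset.sum_smul]
  exact Finset.sum_congr rfl fun j _ ↦ pow_apply j

variable {K M : Type*} [Field K] [AddCommGroup M] [Module K M]

lemma sum_pow_apply_mem_iSup_mul {V : ℕ → Submodule K M} {T : Module.End K M} {ζ : K} {n : ℕ}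
    (hζ : IsPrimitiveRoot ζ n) (hV : ∀ k, ∀ x ∈ V k, T x = ζ ^ k • x) {x : M}
    (hx : x ∈ ⨆ k, V k) : (∑ j ∈ Finset.range n, T ^ j) x ∈ ⨆ k, V (n * k) := by
  induction hx using Submodule.iSup_induction' with
  | zero => rw [map_zero]; exact zero_mem _
  | add x y _ _ hx hy => rw [map_add]; exact add_mem hx hy
  | mem k x hx =>
    rw [sum_pow_apply_of_apply_eq_smul (hV k x hx)]
    by_cases hk : n ∣ k
    · obtain ⟨k, rfl⟩ := hk
      exact Submodule.smul_mem _ _ (Submodule.mem_iSup_of_mem k hx)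
    · have hζk : ζ ^ k ≠ 1 := fun h ↦ hk (hζ.dvd_of_pow_eq_one k h)
      rw [geom_sum_eq hζk, pow_right_comm, hζ.pow_eq_one, one_pow, sub_self, zero_div, zero_smul]
      exact zero_mem _

lemma mem_iSup_mul_of_apply_eq_self {V : ℕ → Submodule K M} {T : Module.End K M} {ζ : K} {n : ℕ}
    (hn : 0 < n) (hζ : IsPrimitiveRoot ζ n) (hV : ∀ k, ∀ x ∈ V k, T x = ζ ^ k • x) {x : M}
    (hx : x ∈ ⨆ k, V k) (hfix : T x = x) : x ∈ ⨆ k, V (n * k) := by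
  have : NeZero n := ⟨hn.ne'⟩
  have n_ne_zero : (n : K) ≠ 0 := hζ.neZero'.out
  have sum_eq : (∑ j ∈ Finset.range n, T ^ j) x = (n : K) • x := by
    simpa using sum_pow_apply_of_apply_eq_smul (r := (1 : K)) (by rw [hfix, one_smul]) n
  exact (Submodule.smul_mem_iff _ n_ne_zero).mp (sum_eq ▸ sum_pow_apply_mem_iSup_mul hζ hV hx)

end Eigenspaces

section FixedElements

variable {K A : Type*} [Field K] [Ring A] [Algebra K A] {u d : A} {ζ : K} {σ : A →ₐ[K] A} {n : ℕ}

lemma two_ne_zero_of_isPrimitiveRoot_even (hn : 0 < n) (hne : Even n) (hζ : IsPrimitiveRoot ζ n) :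
    (2 : K) ≠ 0 := by
  intro h
  have : NeZero n := ⟨hn.ne'⟩
  have hn0 : (n : K) ≠ 0 := hζ.neZero'.out
  obtain ⟨m, rfl⟩ := even_iff_exists_two_mul.mp hne
  simp [h] at hn0

lemma commute_sq_of_map_eq_smul (hζ : ζ ≠ 0) (hσu : σ u = d) (hσd : σ d = ζ • u)
    (hu : Commute (u ^ 2) d) : Commute (d ^ 2) u := by
  have h := hu.map σ
  rwa [map_pow, hσu, hσd, Commute.smul_right_iff₀ hζ] at h

lemma mem_iSup_span_pair_pow_mul_of_map_eq_self (htop : Algebra.adjoin K {u, d} = ⊤) (hn : 0 < n)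
    (hζ : IsPrimitiveRoot ζ n) (hσu : σ u = d) (hσd : σ d = ζ • u) {x : A} (hx : σ x = x) :
    x ∈ ⨆ k, Submodule.span K {u, d} ^ (n * k) := by
  refine mem_iSup_mul_of_apply_eq_self (V := fun k ↦ Submodule.span K {u, d} ^ k)
    (T := (σ.comp σ).toLinearMap) hn hζ
    (fun k y hy ↦ map_map_eq_pow_smul_of_mem_span_pair_pow hσu hσd hy) ?_ ?_
  · exact toSubmodule_adjoin_le_iSup_span_pow {u, d} (by simp [htop])
  · simp [hx]

lemma mem_of_map_eq_self_of_pairTrace_mem (hu : Commute (u ^ 2) d)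
    (htop : Algebra.adjoin K {u, d} = ⊤) (hn : 0 < n) (hne : Even n) (hζ : IsPrimitiveRoot ζ n)
    (hσu : σ u = d) (hσd : σ d = ζ • u) {B : Subalgebra K A}
    (hB : ∀ a b c, a + 2 * b + c = n ∨ a + 2 * b + c = 2 * n →
      pairTrace σ (downUpMonomial u d a b c) ∈ B) {x : A} (hx : σ x = x) : x ∈ B := by
  have hd : Commute (d ^ 2) u := commute_sq_of_map_eq_smul (hζ.ne_zero hn.ne') hσu hσd hu
  have h2 : (2 : K) ≠ 0 := two_ne_zero_of_isPrimitiveRoot_even hn hne hζ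
  have hle : ⨆ k, Submodule.span K {u, d} ^ (n * k) ≤
      (Subalgebra.toSubmodule B).comap (pairTrace σ) :=
    iSup_le fun k _ ↦ pairTrace_mem_of_mem_span_pair_pow_mul h2.isUnit hu hd hσu hσd hne hB k
  have two_smul_mem : (2 : K) • x ∈ B := by
    have h := hle (mem_iSup_span_pair_pow_mul_of_map_eq_self htop hn hζ hσu hσd hx)
    rwa [Submodule.mem_comap, pairTrace_apply, hx, ← two_smul K x] at h
  exact ((Subalgebra.toSubmodule B).smul_mem_iff h2).mp two_smul_mem

theorem fixed_eq_adjoin_of_even_general (hu : Commute (u ^ 2) d)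
    (htop : Algebra.adjoin K {u, d} = ⊤) (hn : 0 < n) (hne : Even n) (hζ : IsPrimitiveRoot ζ n)
    (hσu : σ u = d) (hσd : σ d = ζ • u) :
    {x : A | σ x = x} =
      ↑(Algebra.adjoin K
        {x : A | ∃ a b c : ℕ, (a + 2 * b + c = n ∨ a + 2 * b + c = 2 * n) ∧
          x = downUpMonomial u d a b c + ζ ^ (b + c) • downUpMonomial d u a b c}) := by
  simp only [← pairTrace_downUpMonomial hσu hσd]
  refine Set.Subset.antisymm (fun x hx ↦ ?_) ?_
  · refine mem_of_map_eq_self_of_pairTrace_mem hu htop hn hne hζ hσu hσd (fun a b c h ↦ ?_) hx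
    exact Algebra.subset_adjoin ⟨a, b, c, h, rfl⟩
  · refine Algebra.adjoin_le (S := AlgHom.equalizer σ (AlgHom.id K A)) ?_
    rintro _ ⟨a, b, c, h, rfl⟩
    have hζ1 : ζ ^ (a + 2 * b + c) = 1 := by
      rw [hζ.pow_eq_one_iff_dvd]
      rcases h with h | h <;> simp [h]
    exact map_pairTrace_downUpMonomial hσu hσd hζ1

end FixedElements

section DUAlg

lemma commute_uGen_sq_dGen : Commute (uGen ^ 2) dGen := by
  have h := RingQuot.mkAlgHom_rel ℂ DownUpRel.rel2
  simp only [map_mul] at h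
  rw [Commute, SemiconjBy, sq, ← mul_assoc]
  exact h.symm

lemma adjoin_uGen_dGen : Algebra.adjoin ℂ {uGen, dGen} = ⊤ := by
  have hι : Set.range (FreeAlgebra.ι ℂ) = {FreeAlgebra.ι ℂ (0 : Fin 2), FreeAlgebra.ι ℂ 1} := by
    ext
    simp [Fin.exists_fin_two, eq_comm]
  have hsurj := (AlgHom.range_eq_top _).mpr (RingQuot.mkAlgHom_surjective ℂ DownUpRel)
  rw [← hsurj, ← Algebra.map_top, ← FreeAlgebra.adjoin_range_ι, AlgHom.map_adjoin, hι,
    Set.image_pair]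
  rfl

end DUAlg

/-- If `n` is even then the fixed subring `A^G` of the down-up algebra `A(0,1)`
is generated as a `ℂ`-algebra by the orbit sums of degrees `n` and `2n`. -/
theorem fixed_eq_adjoin_of_even (n : ℕ) (hn : 0 < n) (hne : Even n)
    (g : DUAlg ≃ₐ[ℂ] DUAlg) (hgu : g uGen = dGen) (hgd : g dGen = lam n • uGen) :
    {x : DUAlg | g x = x} =
      ↑(Algebra.adjoin ℂ
        {x : DUAlg | ∃ a b c : ℕ,
          (a + 2 * b + c = n ∨ a + 2 * b + c = 2 * n) ∧ x = orbitSum n a b c}) := by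
  exact fixed_eq_adjoin_of_even_general commute_uGen_sq_dGen adjoin_uGen_dGen hn hne
    (Complex.isPrimitiveRoot_exp n hn.ne') (σ := (g : DUAlg →ₐ[ℂ] DUAlg)) hgu hgd
end
end

section
/- Suppose n is even, and let i, j, p, q be nonnegative integers with 2i+j ≤ n and 2p+q ≤ n. Then the product O(n−2i−j, i, j)·O(n−2p−q, p, q) in A is given as follows. If j and q are both even: it equals O(2n−2i−j−2p−q, p+i, q+j) + λ^{p+q}·O(n−j+q+1, p−i−1, n+2i+j−2p−q+1) when p > i, and O(2n−2i−j−2p−q, p+i, q+j) + λ^{p+q}·O(n−2i−j+q+2p, i−p, n−q+j) when p ≤ i. If j is even and q is odd (assuming additionally 2p+q ≤ n+j−1): it equals λ^{p+q}·O(n−2i−j+q−1, i+p+1, n−2p−q+j−1) + O(2n−j−2p−q, p−i, 2i+j+q) when p ≥ i, and λ^{p+q}·O(n−2i−j+q−1, i+p+1, n−2p−q+j−1) + O(2n−2i−j−q+1, i−p−1, 2p+j+q+1) when p < i. If j is odd and q is even: it equals λ^{p+q}·O(n+q−2i−j, i+p, n+j−2p−q) + O(2n−j−2p−q+1, p−i−1,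 q+2i+j+1) when p > i, and λ^{p+q}·O(n+q−2i−j, i+p, n+j−2p−q) + O(2n−2i−j−q, i−p, 2p+q+j) when p ≤ i. If j and q are both odd: it equals O(2n−2i−j−2p−q−1, i+p+1, q+j−1) + λ^{p+q}·O(n+q−j, p−i, n+2i+j−2p−q) when p ≥ i, and O(2n−2i−j−2p−q−1, i+p+1, q+j−1) + λ^{p+q}·O(n−2i−j+2p+q+1, i−p−1, n−q+j+1) when p < i. -/
/-!
Setting: `lam n = exp(2πi/n)` is a primitive `n`-th root of unity in `ℂ`.
`DUAlg` is the graded down-up algebra `A(0,1) = ℂ⟨u,d⟩/(d²u - ud², du² - u²d)`,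
with generators `uGen`, `dGen`.  The automorphism `g` (of order `2n`) is
determined by `g u = d`, `g d = lam n • u`, and generates the cyclic group `G`,
so that the fixed subring `A^G` is `{a | g a = a}`.  The orbit sum is
`orbitSum n a b c = u^a (du)^b d^c + (lam n)^(b+c) • (d^a (ud)^b u^c)`.
-/

noncomputable section

/-!
Since `u²` and `d²` are central, `du` and `ud` commute and `(du)(ud) = u²d²`. Hence the monomials
`u^a (du)^b d^c` with `a` and `c` even multiply by adding exponents, and the product of such a
monomial with one of the form `d^a' (ud)^p u^q` is obtained by cancelling `(du)^m (ud)^m`.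
A monomial with `a` and `c` odd is one with even exponents for the exchanged pair `(d, u)`, because
`u (du)^b d = (ud)^(b+1)`. Multiplying two orbit sums gives two pairs of monomials exchanged by
`u ↔ d`, and `λ^n = 1` makes each pair an orbit sum.
-/

/-- A pair of elements satisfying the relations `d²u = ud²` and `du² = u²d` of the down-up algebra
`A(0,1)`, written as commutation of the squares so that the symmetry in `u` and `d` is visible. -/
structure IsDownUpPair {M : Type*} [Monoid M] (u d : M) : Prop where
  commute_left_sq : Commute (u ^ 2) d
  commute_right_sq : Commute (d ^ 2) u

/-- The Poincaré–Birkhoff–Witt monomial `u^a (du)^b d^c`. Its arguments `u` and `d` may be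
exchanged, so that both halves of an orbit sum are of this form. -/
def pbwMonomial {M : Type*} [Monoid M] (u d : M) (a b c : ℕ) : M :=
  u ^ a * (d * u) ^ b * d ^ c

namespace IsDownUpPair

variable {M : Type*} [Monoid M] {u d : M} {a i j a' p q b c k : ℕ}

theorem symm (h : IsDownUpPair u d) : IsDownUpPair d u :=
  ⟨h.commute_right_sq, h.commute_left_sq⟩

theorem commute_pow_of_even (h : IsDownUpPair u d) (hk : Even k) : Commute (u ^ k) d := by
  obtain ⟨m, rfl⟩ := hk.exists_two_nsmul
  rw [smul_eq_mul, pow_mul]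
  exact h.commute_left_sq.pow_left m

theorem commute_pow_mul_of_even (h : IsDownUpPair u d) (hk : Even k) : Commute (u ^ k) (d * u) :=
  (h.commute_pow_of_even hk).mul_right (Commute.pow_self u k)

theorem commute_pow_mul_of_even' (h : IsDownUpPair u d) (hk : Even k) : Commute (u ^ k) (u * d) :=
  (Commute.pow_self u k).mul_right (h.commute_pow_of_even hk)

theorem du_mul_ud (h : IsDownUpPair u d) : d * u * (u * d) = u ^ 2 * d ^ 2 := by
  calc d * u * (u * d) = d * u ^ 2 * d := by simp only [pow_two, mul_assoc]
    _ = u ^ 2 * d ^ 2 := by rw [← h.commute_left_sq.eq, mul_assoc, ← pow_two]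

theorem commute_sq_sq (h : IsDownUpPair u d) : Commute (u ^ 2) (d ^ 2) :=
  h.commute_left_sq.pow_right 2

theorem commute_du_ud (h : IsDownUpPair u d) : Commute (d * u) (u * d) :=
  h.du_mul_ud.trans (h.commute_sq_sq.eq.trans h.symm.du_mul_ud.symm)

theorem du_pow_mul_ud_pow (h : IsDownUpPair u d) (k : ℕ) :
    (d * u) ^ k * (u * d) ^ k = u ^ (2 * k) * d ^ (2 * k) := by
  rw [← h.commute_du_ud.mul_pow, h.du_mul_ud, h.commute_sq_sq.mul_pow, pow_mul, pow_mul]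

theorem pbwMonomial_eq_of_even (h : IsDownUpPair u d) (hc : Even c) :
    pbwMonomial u d a b c = u ^ a * d ^ c * (d * u) ^ b := by
  rw [pbwMonomial, mul_assoc, mul_assoc,
    ((h.symm.commute_pow_mul_of_even' hc).pow_right b).eq]

theorem pbwMonomial_eq_swap_of_odd (h : IsDownUpPair u d) (ha : Odd a) (hc : Odd c) :
    pbwMonomial u d a b c = pbwMonomial d u (c - 1) (b + 1) (a - 1) := by
  have ha₁ : Even (a - 1) := ha.tsub_odd odd_one
  calc pbwMonomial u d a b c
      = u ^ (a - 1) * (u * (d * u) ^ b * d) * d ^ (c - 1) := by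
        rw [pbwMonomial, ← pow_sub_one_mul ha.pos.ne' u, ← mul_pow_sub_one hc.pos.ne' d]
        simp only [mul_assoc]
    _ = u ^ (a - 1) * d ^ (c - 1) * (u * d) ^ (b + 1) := by
        rw [← mul_pow_mul, mul_assoc _ u d, ← pow_succ, mul_assoc, mul_assoc,
          ((h.symm.commute_pow_mul_of_even (hc.tsub_odd odd_one)).pow_right _).eq]
    _ = pbwMonomial d u (c - 1) (b + 1) (a - 1) := by
        rw [h.symm.pbwMonomial_eq_of_even ha₁, ((h.commute_pow_of_even ha₁).pow_right _).eq]

theorem pbwMonomial_mul_of_even_even (h : IsDownUpPair u d) (hj : Even j) (ha' : Even a')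
    (hq : Even q) :
    pbwMonomial u d a i j * pbwMonomial u d a' p q =
      pbwMonomial u d (a + a') (p + i) (q + j) := by
  have hud : Commute ((d * u) ^ i) (u ^ a' * d ^ q) :=
    ((h.commute_pow_mul_of_even ha').mul_left (h.symm.commute_pow_mul_of_even' hq)).symm.pow_left i
  have hdu : Commute (d ^ j) (u ^ a') := (h.symm.commute_pow_of_even hj).pow_right a'
  rw [h.pbwMonomial_eq_of_even hj, h.pbwMonomial_eq_of_even hq,
    h.pbwMonomial_eq_of_even (hq.add hj), hud.mul_mul_mul_comm, hdu.mul_mul_mul_comm,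
    ← pow_add, ← pow_add, ← pow_add, add_comm i, add_comm j]

theorem pbwMonomial_mul_swap_of_even_even_of_le (h : IsDownUpPair u d) (hj : Even j) (ha' : Even a')
    (hq : Even q) (hpi : p ≤ i) :
    pbwMonomial u d a i j * pbwMonomial d u a' p q =
      pbwMonomial u d (a + q + 2 * p) (i - p) (a' + j + 2 * p) := by
  have hdu : Commute ((d * u) ^ p) (d ^ a' * u ^ q) :=
    ((h.symm.commute_pow_mul_of_even' ha').mul_left (h.commute_pow_mul_of_even hq)).symm.pow_left p
  have cancel : (d * u) ^ p * pbwMonomial d u a' p q =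
      pbwMonomial u d (q + 2 * p) 0 (a' + 2 * p) := by
    calc (d * u) ^ p * pbwMonomial d u a' p q
        = d ^ a' * u ^ q * ((d * u) ^ p * (u * d) ^ p) := by
          rw [h.symm.pbwMonomial_eq_of_even hq, ← mul_assoc, hdu.eq, mul_assoc]
      _ = d ^ a' * u ^ (q + 2 * p) * d ^ (2 * p) := by
          rw [h.du_pow_mul_ud_pow, pow_add]; simp only [mul_assoc]
      _ = pbwMonomial u d (q + 2 * p) 0 (a' + 2 * p) := by
          rw [((h.symm.commute_pow_of_even ha').pow_right _).eq, pbwMonomial, pow_zero, mul_one,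
            mul_assoc, ← pow_add]
  calc pbwMonomial u d a i j * pbwMonomial d u a' p q
      = pbwMonomial u d a (i - p) j * ((d * u) ^ p * pbwMonomial d u a' p q) := by
        rw [← mul_assoc, h.pbwMonomial_eq_of_even hj, h.pbwMonomial_eq_of_even hj,
          mul_assoc _ ((d * u) ^ (i - p)), pow_sub_mul_pow _ hpi]
    _ = pbwMonomial u d (a + q + 2 * p) (i - p) (a' + j + 2 * p) := by
        rw [cancel, h.pbwMonomial_mul_of_even_even hj (hq.add (even_two_mul p))
          (ha'.add (even_two_mul p)), zero_add, add_right_comm a', ← add_assoc]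

theorem commute_pbwMonomial_swap_of_even (h : IsDownUpPair u d) (ha : Even a) (hj : Even j)
    (ha' : Even a') (hq : Even q) :
    Commute (pbwMonomial u d a i j) (pbwMonomial d u a' p q) := by
  have hu : Commute (u ^ a) (pbwMonomial d u a' p q) :=
    (((h.commute_pow_of_even ha).pow_right a').mul_right
      ((h.commute_pow_mul_of_even' ha).pow_right p)).mul_right (Commute.pow_pow_self u a q)
  have hd : Commute (d ^ j) (pbwMonomial d u a' p q) :=
    ((Commute.pow_pow_self d j a').mul_right
      ((h.symm.commute_pow_mul_of_even hj).pow_right p)).mul_right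
        ((h.symm.commute_pow_of_even hj).pow_right q)
  have hdu : Commute ((d * u) ^ i) (pbwMonomial d u a' p q) :=
    (((h.symm.commute_pow_mul_of_even' ha').symm.pow_left i).mul_right
      (h.commute_du_ud.pow_pow i p)).mul_right ((h.commute_pow_mul_of_even hq).symm.pow_left i)
  exact (hu.mul_left hdu).mul_left hd

theorem pbwMonomial_mul_swap_of_even_even_of_lt (h : IsDownUpPair u d) (ha : Even a) (hj : Even j)
    (ha' : Even a') (hq : Even q) (hip : i < p) :
    pbwMonomial u d a i j * pbwMonomial d u a' p q =
      pbwMonomial u d (a + q + 2 * i + 1) (p - i - 1) (a' + j + 2 * i + 1) := by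
  have hodd : Odd (a + q + 2 * i + 1) := ((ha.add hq).add (even_two_mul i)).add_one
  have hodd' : Odd (a' + j + 2 * i + 1) := ((ha'.add hj).add (even_two_mul i)).add_one
  rw [(h.commute_pbwMonomial_swap_of_even ha hj ha' hq).eq,
    h.symm.pbwMonomial_mul_swap_of_even_even_of_le hq ha hj hip.le,
    h.pbwMonomial_eq_swap_of_odd hodd hodd']
  congr 1
  omega

theorem pbwMonomial_mul_of_even_odd_of_le (h : IsDownUpPair u d) (ha : Even a) (hj : Even j)
    (ha' : Odd a') (hq : Odd q) (hip : i ≤ p) :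
    pbwMonomial u d a i j * pbwMonomial u d a' p q =
      pbwMonomial u d (a + a' + 2 * i) (p - i) (2 * i + j + q) := by
  rw [h.pbwMonomial_eq_swap_of_odd ha' hq, h.pbwMonomial_mul_swap_of_even_even_of_lt ha hj
    (hq.tsub_odd odd_one) (ha'.tsub_odd odd_one) (Nat.lt_succ_of_le hip)]
  have ha'_pos := ha'.pos
  have hq_pos := hq.pos
  congr 1 <;> omega

theorem pbwMonomial_mul_of_even_odd_of_lt (h : IsDownUpPair u d) (hj : Even j)
    (ha' : Odd a') (hq : Odd q) (hpi : p < i) :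
    pbwMonomial u d a i j * pbwMonomial u d a' p q =
      pbwMonomial u d (a + a' + 2 * p + 1) (i - p - 1) (2 * p + j + q + 1) := by
  rw [h.pbwMonomial_eq_swap_of_odd ha' hq, h.pbwMonomial_mul_swap_of_even_even_of_le hj
    (hq.tsub_odd odd_one) (ha'.tsub_odd odd_one) hpi]
  have ha'_pos := ha'.pos
  have hq_pos := hq.pos
  congr 1 <;> omega

theorem pbwMonomial_mul_swap_of_even_odd (h : IsDownUpPair u d) (hj : Even j)
    (ha' : Odd a') (hq : Odd q) :
    pbwMonomial u d a i j * pbwMonomial d u a' p q =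
      pbwMonomial u d (a + q - 1) (i + p + 1) (a' + j - 1) := by
  rw [h.symm.pbwMonomial_eq_swap_of_odd ha' hq, h.pbwMonomial_mul_of_even_even hj
    (hq.tsub_odd odd_one) (ha'.tsub_odd odd_one)]
  have ha'_pos := ha'.pos
  have hq_pos := hq.pos
  congr 1 <;> omega

theorem commute_pbwMonomial_of_odd_even (h : IsDownUpPair u d) (ha : Odd a) (hj : Odd j)
    (ha' : Even a') (hq : Even q) :
    Commute (pbwMonomial u d a i j) (pbwMonomial u d a' p q) := by
  rw [h.pbwMonomial_eq_swap_of_odd ha hj]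
  exact (h.commute_pbwMonomial_swap_of_even ha' hq (hj.tsub_odd odd_one)
    (ha.tsub_odd odd_one)).symm

theorem pbwMonomial_mul_of_odd_even_of_lt (h : IsDownUpPair u d) (ha : Odd a) (hj : Odd j)
    (ha' : Even a') (hq : Even q) (hip : i < p) :
    pbwMonomial u d a i j * pbwMonomial u d a' p q =
      pbwMonomial u d (a + a' + 2 * i + 1) (p - i - 1) (q + 2 * i + j + 1) := by
  rw [(h.commute_pbwMonomial_of_odd_even ha hj ha' hq).eq,
    h.pbwMonomial_mul_of_even_odd_of_lt hq ha hj hip, add_comm a' a, add_comm (2 * i) q]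

theorem pbwMonomial_mul_of_odd_even_of_le (h : IsDownUpPair u d) (ha : Odd a) (hj : Odd j)
    (ha' : Even a') (hq : Even q) (hpi : p ≤ i) :
    pbwMonomial u d a i j * pbwMonomial u d a' p q =
      pbwMonomial u d (a + a' + 2 * p) (i - p) (2 * p + q + j) := by
  rw [(h.commute_pbwMonomial_of_odd_even ha hj ha' hq).eq,
    h.pbwMonomial_mul_of_even_odd_of_le ha' hq ha hj hpi, add_comm a' a]

theorem pbwMonomial_mul_swap_of_odd_even (h : IsDownUpPair u d) (ha : Odd a) (hj : Odd j)
    (ha' : Even a') (hq : Even q) :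
    pbwMonomial u d a i j * pbwMonomial d u a' p q =
      pbwMonomial u d (a + q) (i + p) (a' + j) := by
  rw [h.pbwMonomial_eq_swap_of_odd ha hj, h.pbwMonomial_eq_swap_of_odd (ha.add_even hq)
    (ha'.add_odd hj), h.symm.pbwMonomial_mul_of_even_even (ha.tsub_odd odd_one) ha' hq]
  have ha_pos := ha.pos
  have hj_pos := hj.pos
  congr 1 <;> omega

theorem pbwMonomial_mul_of_odd_odd (h : IsDownUpPair u d) (ha : Odd a) (hj : Odd j)
    (ha' : Odd a') (hq : Odd q) :
    pbwMonomial u d a i j * pbwMonomial u d a' p q =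
      pbwMonomial u d (a + a' - 1) (i + p + 1) (q + j - 1) := by
  rw [h.pbwMonomial_eq_swap_of_odd ha' hq, h.pbwMonomial_mul_swap_of_odd_even ha hj
    (hq.tsub_odd odd_one) (ha'.tsub_odd odd_one)]
  have ha'_pos := ha'.pos
  have hq_pos := hq.pos
  congr 1 <;> omega

theorem pbwMonomial_mul_swap_of_odd_odd_of_le (h : IsDownUpPair u d) (ha : Odd a) (hj : Odd j)
    (ha' : Odd a') (hq : Odd q) (hip : i ≤ p) :
    pbwMonomial u d a i j * pbwMonomial d u a' p q =
      pbwMonomial u d (a + q + 2 * i) (p - i) (a' + j + 2 * i) := by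
  rw [h.symm.pbwMonomial_eq_swap_of_odd ha' hq, h.pbwMonomial_mul_of_odd_even_of_lt ha hj
    (hq.tsub_odd odd_one) (ha'.tsub_odd odd_one) (Nat.lt_succ_of_le hip)]
  have ha'_pos := ha'.pos
  have hq_pos := hq.pos
  congr 1 <;> omega

theorem pbwMonomial_mul_swap_of_odd_odd_of_lt (h : IsDownUpPair u d) (ha : Odd a) (hj : Odd j)
    (ha' : Odd a') (hq : Odd q) (hpi : p < i) :
    pbwMonomial u d a i j * pbwMonomial d u a' p q =
      pbwMonomial u d (a + q + 2 * p + 1) (i - p - 1) (a' + j + 2 * p + 1) := by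
  rw [h.symm.pbwMonomial_eq_swap_of_odd ha' hq, h.pbwMonomial_mul_of_odd_even_of_le ha hj
    (hq.tsub_odd odd_one) (ha'.tsub_odd odd_one) hpi]
  have ha'_pos := ha'.pos
  have hq_pos := hq.pos
  congr 1 <;> omega

end IsDownUpPair

theorem isDownUpPair_uGen_dGen : IsDownUpPair uGen dGen where
  commute_left_sq := by
    have rel : dGen * uGen * uGen = uGen * uGen * dGen := by
      simpa only [map_mul, uGen, dGen] using RingQuot.mkAlgHom_rel ℂ DownUpRel.rel2
    rw [pow_two]
    exact rel.symm.trans (mul_assoc _ _ _)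
  commute_right_sq := by
    have rel : dGen * dGen * uGen = uGen * dGen * dGen := by
      simpa only [map_mul, uGen, dGen] using RingQuot.mkAlgHom_rel ℂ DownUpRel.rel1
    rw [pow_two]
    exact rel.trans (mul_assoc _ _ _)

theorem lam_pow_eq_one_of_dvd {n m : ℕ} (hnm : n ∣ m) : lam n ^ m = 1 := by
  obtain ⟨k, rfl⟩ := hnm
  rcases n.eq_zero_or_pos with rfl | hn
  · rw [zero_mul, pow_zero]
  · rw [pow_mul, lam, (Complex.isPrimitiveRoot_exp n hn.ne').pow_eq_one, one_pow]

theorem orbitSum_mul_orbitSum_of_pbwMonomial_mul {n a i j a' p q a₁ b₁ c₁ a₂ b₂ c₂ : ℕ}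
    (hdeg : n ∣ a' + 2 * p + q)
    (same : ∀ {u d : DUAlg}, IsDownUpPair u d →
      pbwMonomial u d a i j * pbwMonomial u d a' p q = pbwMonomial u d a₁ b₁ c₁)
    (swap : ∀ {u d : DUAlg}, IsDownUpPair u d →
      pbwMonomial u d a i j * pbwMonomial d u a' p q = pbwMonomial u d a₂ b₂ c₂)
    (same_exp : b₁ + c₁ = i + j + (p + q))
    (swap_exp : p + q + (b₂ + c₂) = i + j + (a' + 2 * p + q)) :
    orbitSum n a i j * orbitSum n a' p q =
      orbitSum n a₁ b₁ c₁ + lam n ^ (p + q) • orbitSum n a₂ b₂ c₂ := by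
  have h := isDownUpPair_uGen_dGen
  have swap_coeff : lam n ^ (p + q) * lam n ^ (b₂ + c₂) = lam n ^ (i + j) := by
    rw [← pow_add, swap_exp, pow_add, lam_pow_eq_one_of_dvd hdeg, mul_one]
  have expand (a b c : ℕ) : orbitSum n a b c =
      pbwMonomial uGen dGen a b c + lam n ^ (b + c) • pbwMonomial dGen uGen a b c := rfl
  simp only [expand, add_mul, mul_add, smul_add, smul_mul_assoc, mul_smul_comm, smul_smul,
    same h, same h.symm, swap h, swap h.symm, swap_coeff, same_exp, pow_add _ (i + j),
    mul_comm (lam n ^ (p + q)) (lam n ^ (i + j))]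
  abel

theorem orbitSum_deg_n_mul_deg_n_general {n a i j a' p q : ℕ} (haj : Even (a + j))
    (haq : Even (a' + q)) (hdeg : n ∣ a' + 2 * p + q) :
    (Even j → Even q → p > i →
      orbitSum n a i j * orbitSum n a' p q =
        orbitSum n (a + a') (p + i) (q + j) +
          lam n ^ (p + q) •
            orbitSum n (a + q + 2 * i + 1) (p - i - 1) (a' + j + 2 * i + 1)) ∧
    (Even j → Even q → p ≤ i →
      orbitSum n a i j * orbitSum n a' p q =
        orbitSum n (a + a') (p + i) (q + j) +
          lam n ^ (p + q) • orbitSum n (a + q + 2 * p) (i - p) (a' + j + 2 * p)) ∧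
    (Even j → Odd q → p ≥ i →
      orbitSum n a i j * orbitSum n a' p q =
        lam n ^ (p + q) • orbitSum n (a + q - 1) (i + p + 1) (a' + j - 1) +
          orbitSum n (a + a' + 2 * i) (p - i) (2 * i + j + q)) ∧
    (Even j → Odd q → p < i →
      orbitSum n a i j * orbitSum n a' p q =
        lam n ^ (p + q) • orbitSum n (a + q - 1) (i + p + 1) (a' + j - 1) +
          orbitSum n (a + a' + 2 * p + 1) (i - p - 1) (2 * p + j + q + 1)) ∧
    (Odd j → Even q → p > i →
      orbitSum n a i j * orbitSum n a' p q =
        lam n ^ (p + q) • orbitSum n (a + q) (i + p) (a' + j) +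
          orbitSum n (a + a' + 2 * i + 1) (p - i - 1) (q + 2 * i + j + 1)) ∧
    (Odd j → Even q → p ≤ i →
      orbitSum n a i j * orbitSum n a' p q =
        lam n ^ (p + q) • orbitSum n (a + q) (i + p) (a' + j) +
          orbitSum n (a + a' + 2 * p) (i - p) (2 * p + q + j)) ∧
    (Odd j → Odd q → p ≥ i →
      orbitSum n a i j * orbitSum n a' p q =
        orbitSum n (a + a' - 1) (i + p + 1) (q + j - 1) +
          lam n ^ (p + q) • orbitSum n (a + q + 2 * i) (p - i) (a' + j + 2 * i)) ∧
    (Odd j → Odd q → p < i →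
      orbitSum n a i j * orbitSum n a' p q =
        orbitSum n (a + a' - 1) (i + p + 1) (q + j - 1) +
          lam n ^ (p + q) •
            orbitSum n (a + q + 2 * p + 1) (i - p - 1) (a' + j + 2 * p + 1)) := by
  have parity : Even a ↔ Even j := Nat.even_add.mp haj
  have parity' : Even a' ↔ Even q := Nat.even_add.mp haq
  have odd_parity : Odd a ↔ Odd j := Nat.even_add'.mp haj
  have odd_parity' : Odd a' ↔ Odd q := Nat.even_add'.mp haq
  refine ⟨fun hj hq hip => ?_, fun hj hq hpi => ?_, fun hj hq hip => ?_, fun hj hq hpi => ?_,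
    fun hj hq hip => ?_, fun hj hq hpi => ?_, fun hj hq hip => ?_, fun hj hq hpi => ?_⟩
  · exact orbitSum_mul_orbitSum_of_pbwMonomial_mul hdeg
      (fun h => h.pbwMonomial_mul_of_even_even hj (parity'.mpr hq) hq)
      (fun h => h.pbwMonomial_mul_swap_of_even_even_of_lt
        (parity.mpr hj) hj (parity'.mpr hq) hq hip)
      (by grind) (by grind)
  · exact orbitSum_mul_orbitSum_of_pbwMonomial_mul hdeg
      (fun h => h.pbwMonomial_mul_of_even_even hj (parity'.mpr hq) hq)
      (fun h => h.pbwMonomial_mul_swap_of_even_even_of_le hj (parity'.mpr hq) hq hpi)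
      (by grind) (by grind)
  · exact (orbitSum_mul_orbitSum_of_pbwMonomial_mul hdeg
      (fun h => h.pbwMonomial_mul_of_even_odd_of_le (parity.mpr hj) hj (odd_parity'.mpr hq) hq hip)
      (fun h => h.pbwMonomial_mul_swap_of_even_odd hj (odd_parity'.mpr hq) hq)
      (by grind) (by grind)).trans (add_comm _ _)
  · exact (orbitSum_mul_orbitSum_of_pbwMonomial_mul hdeg
      (fun h => h.pbwMonomial_mul_of_even_odd_of_lt hj (odd_parity'.mpr hq) hq hpi)
      (fun h => h.pbwMonomial_mul_swap_of_even_odd hj (odd_parity'.mpr hq) hq)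
      (by grind) (by grind)).trans (add_comm _ _)
  · exact (orbitSum_mul_orbitSum_of_pbwMonomial_mul hdeg
      (fun h => h.pbwMonomial_mul_of_odd_even_of_lt (odd_parity.mpr hj) hj (parity'.mpr hq) hq hip)
      (fun h => h.pbwMonomial_mul_swap_of_odd_even (odd_parity.mpr hj) hj (parity'.mpr hq) hq)
      (by grind) (by grind)).trans (add_comm _ _)
  · exact (orbitSum_mul_orbitSum_of_pbwMonomial_mul hdeg
      (fun h => h.pbwMonomial_mul_of_odd_even_of_le (odd_parity.mpr hj) hj (parity'.mpr hq) hq hpi)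
      (fun h => h.pbwMonomial_mul_swap_of_odd_even (odd_parity.mpr hj) hj (parity'.mpr hq) hq)
      (by grind) (by grind)).trans (add_comm _ _)
  · exact orbitSum_mul_orbitSum_of_pbwMonomial_mul hdeg
      (fun h => h.pbwMonomial_mul_of_odd_odd (odd_parity.mpr hj) hj (odd_parity'.mpr hq) hq)
      (fun h => h.pbwMonomial_mul_swap_of_odd_odd_of_le
        (odd_parity.mpr hj) hj (odd_parity'.mpr hq) hq hip)
      (by grind) (by grind)
  · exact orbitSum_mul_orbitSum_of_pbwMonomial_mul hdeg
      (fun h => h.pbwMonomial_mul_of_odd_odd (odd_parity.mpr hj) hj (odd_parity'.mpr hq) hq)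
      (fun h => h.pbwMonomial_mul_swap_of_odd_odd_of_lt
        (odd_parity.mpr hj) hj (odd_parity'.mpr hq) hq hpi)
      (by grind) (by grind)

/-- For `n` even, the product of two degree-`n` orbit sums in the down-up
algebra `A(0,1)` (Proposition 3.2 of the paper). -/
theorem orbitSum_deg_n_mul_deg_n (n : ℕ) (hn : 0 < n) (hne : Even n)
    (i j p q : ℕ) (hij : 2 * i + j ≤ n) (hpq : 2 * p + q ≤ n) :
    (Even j → Even q → p > i →
      orbitSum n (n - 2 * i - j) i j * orbitSum n (n - 2 * p - q) p q =
        orbitSum n (2 * n - 2 * i - j - 2 * p - q) (p + i) (q + j) +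
          (lam n ^ (p + q)) •
            orbitSum n (n - j + q + 1) (p - i - 1) (n + 2 * i + j - 2 * p - q + 1)) ∧
    (Even j → Even q → p ≤ i →
      orbitSum n (n - 2 * i - j) i j * orbitSum n (n - 2 * p - q) p q =
        orbitSum n (2 * n - 2 * i - j - 2 * p - q) (p + i) (q + j) +
          (lam n ^ (p + q)) •
            orbitSum n (n - 2 * i - j + q + 2 * p) (i - p) (n - q + j)) ∧
    (Even j → Odd q → 2 * p + q ≤ n + j - 1 → p ≥ i →
      orbitSum n (n - 2 * i - j) i j * orbitSum n (n - 2 * p - q) p q =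
        (lam n ^ (p + q)) •
            orbitSum n (n - 2 * i - j + q - 1) (i + p + 1) (n - 2 * p - q + j - 1) +
          orbitSum n (2 * n - j - 2 * p - q) (p - i) (2 * i + j + q)) ∧
    (Even j → Odd q → 2 * p + q ≤ n + j - 1 → p < i →
      orbitSum n (n - 2 * i - j) i j * orbitSum n (n - 2 * p - q) p q =
        (lam n ^ (p + q)) •
            orbitSum n (n - 2 * i - j + q - 1) (i + p + 1) (n - 2 * p - q + j - 1) +
          orbitSum n (2 * n - 2 * i - j - q + 1) (i - p - 1) (2 * p + j + q + 1)) ∧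
    (Odd j → Even q → p > i →
      orbitSum n (n - 2 * i - j) i j * orbitSum n (n - 2 * p - q) p q =
        (lam n ^ (p + q)) •
            orbitSum n (n + q - 2 * i - j) (i + p) (n + j - 2 * p - q) +
          orbitSum n (2 * n - j - 2 * p - q + 1) (p - i - 1) (q + 2 * i + j + 1)) ∧
    (Odd j → Even q → p ≤ i →
      orbitSum n (n - 2 * i - j) i j * orbitSum n (n - 2 * p - q) p q =
        (lam n ^ (p + q)) •
            orbitSum n (n + q - 2 * i - j) (i + p) (n + j - 2 * p - q) +
          orbitSum n (2 * n - 2 * i - j - q) (i - p) (2 * p + q + j)) ∧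
    (Odd j → Odd q → p ≥ i →
      orbitSum n (n - 2 * i - j) i j * orbitSum n (n - 2 * p - q) p q =
        orbitSum n (2 * n - 2 * i - j - 2 * p - q - 1) (i + p + 1) (q + j - 1) +
          (lam n ^ (p + q)) •
            orbitSum n (n + q - j) (p - i) (n + 2 * i + j - 2 * p - q)) ∧
    (Odd j → Odd q → p < i →
      orbitSum n (n - 2 * i - j) i j * orbitSum n (n - 2 * p - q) p q =
        orbitSum n (2 * n - 2 * i - j - 2 * p - q - 1) (i + p + 1) (q + j - 1) +
          (lam n ^ (p + q)) •
            orbitSum n (n - 2 * i - j + 2 * p + q + 1) (i - p - 1) (n - q + j + 1)) := by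
  obtain ⟨h₁, h₂, h₃, h₄, h₅, h₆, h₇, h₈⟩ :=
    orbitSum_deg_n_mul_deg_n_general (n := n) (a := n - 2 * i - j) (i := i) (j := j)
      (a' := n - 2 * p - q) (p := p) (q := q) (by grind) (by grind) (dvd_of_eq (by omega))
  refine ⟨fun hj hq hp => ?_, fun hj hq hp => ?_, fun hj hq _ hp => ?_, fun hj hq _ hp => ?_,
    fun hj hq hp => ?_, fun hj hq hp => ?_, fun hj hq hp => ?_, fun hj hq hp => ?_⟩
  · convert h₁ hj hq hp using 4 <;> omega
  · convert h₂ hj hq hp using 4 <;> omega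
  · convert h₃ hj hq hp using 4
    omega
  · convert h₄ hj hq hp using 4
    omega
  · convert h₅ hj hq hp using 4 <;> omega
  · convert h₆ hj hq hp using 4 <;> omega
  · convert h₇ hj hq hp using 4 <;> omega
  · convert h₈ hj hq hp using 4 <;> omega
end
end

section
/- Suppose n is odd. Then the fixed subring A^G is strictly larger than the ℂ-subalgebra of A generated by the orbit sums of degrees n and 2n: A^G ≠ the ℂ-subalgebra generated by {O(a,b,c) : a, b, c ≥ 0, a+2b+c ∈ {n, 2n}}. (This is the lower bound β(g) ≥ 3n > |G| = 2n for the action on the down-up algebra A(0,1), so the Noether bound fails.) -/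
/-!
Setting: `lam n = exp(2πi/n)` is a primitive `n`-th root of unity in `ℂ`.
`DUAlg` is the graded down-up algebra `A(0,1) = ℂ⟨u,d⟩/(d²u - ud², du² - u²d)`,
with generators `uGen`, `dGen`.  The automorphism `g` (of order `2n`) is
determined by `g u = d`, `g d = lam n • u`, and generates the cyclic group `G`,
so that the fixed subring `A^G` is `{a | g a = a}`.  The orbit sum is
`orbitSum n a b c = u^a (du)^b d^c + (lam n)^(b+c) • (d^a (ud)^b u^c)`.
-/

noncomputable section

/-!
Choose `μ` with `μ ^ 2 = -lam n` and put `ε = μ ^ n`; since `n` is odd, `ε ^ 2 = -1`. There is a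
representation `ρ` of `A(0,1)` on `ℂ²` in which conjugation by `diag(1, ε)` intertwines the scaling
`u ↦ μ u, d ↦ μ d` with the automorphism `g`. Reading off the lower left entry, a fixed element `x`
that is homogeneous of degree `N` satisfies `ρ x 1 0 = ε * μ ^ N * ρ x 1 0`. The factor `ε * μ ^ N`
is `-1` for `N = n` and `-ε` for `N = 2n`, so the orbit sums of these degrees act by upper
triangular matrices; it is `1` for `N = 3n`, and the invariant `u ^ (3n) + d ^ (3n)` does not act by
an upper triangular matrix.
-/

lemma lam_pow_self (n : ℕ) : lam n ^ n = 1 := by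
  rcases eq_or_ne n 0 with rfl | hn
  · exact pow_zero _
  · exact (Complex.isPrimitiveRoot_exp n hn).pow_eq_one

lemma exists_sq_eq_neg_lam {n : ℕ} (hodd : Odd n) :
    ∃ μ ε : ℂ, μ ^ 2 = -lam n ∧ μ ^ n = ε ∧ ε ^ 2 = -1 := by
  obtain ⟨μ, hμ⟩ := IsAlgClosed.exists_pow_nat_eq (-lam n) two_pos
  exact ⟨μ, μ ^ n, hμ, rfl, by rw [pow_right_comm, hμ, hodd.neg_pow, lam_pow_self]⟩

lemma mul_pow_ne_one_of_eq_or_eq_two_mul {μ ε : ℂ} {n N : ℕ} (hμε : μ ^ n = ε) (hε : ε ^ 2 = -1)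
    (hN : N = n ∨ N = 2 * n) : ε * μ ^ N ≠ 1 := by
  rcases hN with rfl | rfl
  · rw [hμε, ← sq, hε]
    norm_num
  · rw [mul_comm 2, pow_mul, hμε, hε]
    intro h
    obtain rfl : ε = -1 := by linear_combination -h
    norm_num at hε

lemma orbitSum_zero_zero (n a : ℕ) : orbitSum n a 0 0 = uGen ^ a + dGen ^ a := by
  simp [orbitSum]

lemma map_orbitSum_eq_self {n : ℕ} {g : DUAlg →ₐ[ℂ] DUAlg} (hgu : g uGen = dGen)
    (hgd : g dGen = lam n • uGen) {a b c : ℕ} (hn : n ∣ a + 2 * b + c) :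
    g (orbitSum n a b c) = orbitSum n a b c := by
  have hlam : lam n ^ (a + 2 * b + c) = 1 := by
    obtain ⟨k, hk⟩ := hn
    rw [hk, pow_mul, lam_pow_self, one_pow]
  have hmap : g (orbitSum n a b c) = (lam n ^ (b + c)) • (dGen ^ a * (uGen * dGen) ^ b * uGen ^ c)
      + (lam n ^ (a + 2 * b + c)) • (uGen ^ a * (dGen * uGen) ^ b * dGen ^ c) := by
    simp only [orbitSum, map_add, map_mul, map_pow, map_smul, hgu, hgd, smul_pow, smul_mul_assoc,
      mul_smul_comm, smul_smul]
    congr 2 <;> ring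
  rw [hmap, hlam, one_smul, add_comm, orbitSum]

lemma map_apply_one_zero_eq_zero_of_mem_adjoin {R A : Type*} [CommSemiring R] [Semiring A]
    [Algebra R A] (φ : A →ₐ[R] Matrix (Fin 2) (Fin 2) R) {s : Set A} (hs : ∀ x ∈ s, φ x 1 0 = 0)
    {x : A} (hx : x ∈ Algebra.adjoin R s) : φ x 1 0 = 0 := by
  have hle : Algebra.adjoin R s ≤ (Matrix.blockTriangularSubalgebra R R id).comap φ := by
    refine Algebra.adjoin_le fun y hy i j hij => ?_
    obtain ⟨rfl, rfl⟩ : i = 1 ∧ j = 0 := by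
      simp only [id] at hij
      omega
    exact hs y hy
  exact hle hx Fin.zero_lt_one

namespace DUAlg

section UniversalProperty

variable {B : Type*} [Semiring B] [Algebra ℂ B]

/-- The universal property of `A(0,1)`: the algebra homomorphism sending `u` to `x` and `d` to `y`,
for `x` and `y` satisfying the defining relations. -/
def lift (x y : B) (hyx : y * y * x = x * y * y) (hxy : y * x * x = x * x * y) : DUAlg →ₐ[ℂ] B :=
  RingQuot.liftAlgHom ℂ ⟨FreeAlgebra.lift ℂ ![x, y], by
    rintro _ _ (_ | _)
    · simpa using hyx
    · simpa using hxy⟩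

variable {x y : B} {hyx : y * y * x = x * y * y} {hxy : y * x * x = x * x * y}

@[simp]
lemma lift_uGen : lift x y hyx hxy uGen = x := by
  simp [lift, uGen]

@[simp]
lemma lift_dGen : lift x y hyx hxy dGen = y := by
  simp [lift, dGen]

lemma induction {motive : DUAlg → Prop} (algebraMap : ∀ r, motive (algebraMap ℂ DUAlg r))
    (u : motive uGen) (d : motive dGen) (mul : ∀ x y, motive x → motive y → motive (x * y))
    (add : ∀ x y, motive x → motive y → motive (x + y)) (x : DUAlg) : motive x := by
  obtain ⟨w, rfl⟩ := RingQuot.mkAlgHom_surjective ℂ DownUpRel x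
  induction w using FreeAlgebra.induction with
  | grade0 r => simpa only [AlgHom.commutes] using algebraMap r
  | grade1 i =>
    fin_cases i
    · exact u
    · exact d
  | mul v w hv hw => simpa only [map_mul] using mul _ _ hv hw
  | add v w hv hw => simpa only [map_add] using add _ _ hv hw

lemma semiconjBy_of_generators {φ ψ : DUAlg →ₐ[ℂ] B} {b : B}
    (hu : SemiconjBy b (φ uGen) (ψ uGen)) (hd : SemiconjBy b (φ dGen) (ψ dGen)) (x : DUAlg) :
    SemiconjBy b (φ x) (ψ x) := by
  induction x using DUAlg.induction with
  | algebraMap r => simpa only [AlgHom.commutes] using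
      (Algebra.commute_algebraMap_right r b).semiconjBy
  | u => exact hu
  | d => exact hd
  | mul x y hx hy => simpa only [map_mul] using hx.mul_right hy
  | add x y hx hy => simpa only [map_add] using hx.add_right hy

end UniversalProperty

/-- The endomorphism multiplying both generators by `t`. It encodes the grading: `x` is treated as
homogeneous of degree `N` when `scale t x = t ^ N • x`. -/
def scale (t : ℂ) : DUAlg →ₐ[ℂ] DUAlg :=
  lift (t • uGen) (t • dGen)
    (by simpa [uGen, dGen] using
      congrArg (t • t • t • ·) (RingQuot.mkAlgHom_rel ℂ DownUpRel.rel1))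
    (by simpa [uGen, dGen] using
      congrArg (t • t • t • ·) (RingQuot.mkAlgHom_rel ℂ DownUpRel.rel2))

lemma scale_uGen (t : ℂ) : scale t uGen = t • uGen := lift_uGen

lemma scale_dGen (t : ℂ) : scale t dGen = t • dGen := lift_dGen

lemma scale_orbitSum (t : ℂ) (n a b c : ℕ) :
    scale t (orbitSum n a b c) = t ^ (a + 2 * b + c) • orbitSum n a b c := by
  simp only [orbitSum, map_add, map_mul, map_pow, map_smul, scale_uGen, scale_dGen, smul_pow,
    smul_mul_assoc, mul_smul_comm, smul_smul, smul_add]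
  congr 2 <;> ring

/-- The two-dimensional representation of `A(0,1)` in which `d` acts as the conjugate of `μ u` by
`diag(1, ε)` when `ε ^ 2 = -1`. -/
def rep (μ ε : ℂ) : DUAlg →ₐ[ℂ] Matrix (Fin 2) (Fin 2) ℂ :=
  lift !![0, 1; 1, 0] (μ • !![0, -ε; ε, 0])
    (by ext i j; fin_cases i <;> fin_cases j <;> simp)
    (by ext i j; fin_cases i <;> fin_cases j <;> simp)

section Twist

variable {μ ε c : ℂ} {g : DUAlg →ₐ[ℂ] DUAlg}

lemma semiconjBy_rep_scale (hε : ε ^ 2 = -1) (hμ : μ ^ 2 = -c) (hgu : g uGen = dGen)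
    (hgd : g dGen = c • uGen) (x : DUAlg) :
    SemiconjBy (Matrix.diagonal ![1, ε]) (rep μ ε (scale μ x)) (rep μ ε (g x)) := by
  obtain rfl : c = -μ ^ 2 := by rw [hμ, neg_neg]
  refine semiconjBy_of_generators (φ := (rep μ ε).comp (scale μ)) (ψ := (rep μ ε).comp g) ?_ ?_ x
  · simp only [AlgHom.comp_apply, scale_uGen, hgu, map_smul, rep, lift_uGen, lift_dGen]
    ext i j
    fin_cases i <;> fin_cases j <;> simp [mul_comm ε, mul_assoc, ← sq, hε]
  · simp only [AlgHom.comp_apply, scale_dGen, hgd, map_smul, rep, lift_uGen, lift_dGen]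
    ext i j
    fin_cases i <;> fin_cases j <;> simp [← mul_assoc, mul_right_comm, ← sq, hε]

lemma rep_map_apply_one_zero (hε : ε ^ 2 = -1) (hμ : μ ^ 2 = -c) (hgu : g uGen = dGen)
    (hgd : g dGen = c • uGen) {x : DUAlg} {N : ℕ} (hx : scale μ x = μ ^ N • x) :
    rep μ ε (g x) 1 0 = ε * μ ^ N * rep μ ε x 1 0 := by
  have h := congr_fun₂ (semiconjBy_rep_scale hε hμ hgu hgd x).eq 1 0
  simpa [hx, Matrix.diagonal_mul, Matrix.mul_diagonal, mul_assoc] using h.symm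

lemma rep_apply_one_zero_eq_zero_of_fixed (hε : ε ^ 2 = -1) (hμ : μ ^ 2 = -c)
    (hgu : g uGen = dGen) (hgd : g dGen = c • uGen) {x : DUAlg} {N : ℕ}
    (hx : scale μ x = μ ^ N • x) (hgx : g x = x) (hN : ε * μ ^ N ≠ 1) :
    rep μ ε x 1 0 = 0 := by
  have h := rep_map_apply_one_zero hε hμ hgu hgd hx
  rw [hgx] at h
  exact (mul_left_eq_self₀.mp h.symm).resolve_left hN

lemma rep_uGen_pow_add_dGen_pow_apply_one_zero (hε : ε ^ 2 = -1) (hμ : μ ^ 2 = -c)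
    (hgu : g uGen = dGen) (hgd : g dGen = c • uGen) {N : ℕ} (hN : Odd N) :
    rep μ ε (uGen ^ N + dGen ^ N) 1 0 = 1 + ε * μ ^ N := by
  have hu : rep μ ε (uGen ^ N) 1 0 = 1 := by
    obtain ⟨k, rfl⟩ := hN
    have hsq : (!![0, 1; 1, 0] : Matrix (Fin 2) (Fin 2) ℂ) ^ 2 = 1 := by
      simp [sq, Matrix.one_fin_two]
    simp [rep, pow_succ, pow_mul, hsq]
  have hd : rep μ ε (dGen ^ N) 1 0 = ε * μ ^ N := by
    have h := rep_map_apply_one_zero (x := uGen ^ N) (N := N) hε hμ hgu hgd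
      (by rw [map_pow, scale_uGen, smul_pow])
    rwa [map_pow, hgu, hu, mul_one] at h
  rw [map_add, Matrix.add_apply, hu, hd]

lemma rep_orbitSum_apply_one_zero_eq_zero {n : ℕ} (hε : ε ^ 2 = -1) (hμ : μ ^ 2 = -lam n)
    (hgu : g uGen = dGen) (hgd : g dGen = lam n • uGen) {i j k : ℕ} (hn : n ∣ i + 2 * j + k)
    (hne : ε * μ ^ (i + 2 * j + k) ≠ 1) : rep μ ε (orbitSum n i j k) 1 0 = 0 :=
  rep_apply_one_zero_eq_zero_of_fixed hε hμ hgu hgd (scale_orbitSum μ n i j k)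
    (map_orbitSum_eq_self hgu hgd hn) hne

end Twist

end DUAlg

/-- If `n` is odd then the fixed subring `A^G` of the down-up algebra `A(0,1)`
is strictly larger than the `ℂ`-subalgebra generated by the orbit sums of
degrees `n` and `2n` (the Noether bound fails). -/
theorem fixed_ne_adjoin_of_odd (n : ℕ) (hodd : Odd n)
    (g : DUAlg ≃ₐ[ℂ] DUAlg) (hgu : g uGen = dGen) (hgd : g dGen = lam n • uGen) :
    {x : DUAlg | g x = x} ≠
      ↑(Algebra.adjoin ℂ
        {x : DUAlg | ∃ a b c : ℕ,
          (a + 2 * b + c = n ∨ a + 2 * b + c = 2 * n) ∧ x = orbitSum n a b c}) := by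
  obtain ⟨μ, ε, hμ, hμε, hε⟩ := exists_sq_eq_neg_lam hodd
  have hzero : ∀ x ∈ {x : DUAlg | ∃ a b c : ℕ,
      (a + 2 * b + c = n ∨ a + 2 * b + c = 2 * n) ∧ x = orbitSum n a b c},
      DUAlg.rep μ ε x 1 0 = 0 := by
    rintro _ ⟨a, b, c, hN, rfl⟩
    have hdvd : n ∣ a + 2 * b + c := by rcases hN with hN | hN <;> simp [hN]
    exact DUAlg.rep_orbitSum_apply_one_zero_eq_zero (g := g) hε hμ hgu hgd hdvd
      (mul_pow_ne_one_of_eq_or_eq_two_mul hμε hε hN)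
  have htwo : DUAlg.rep μ ε (orbitSum n (3 * n) 0 0) 1 0 = 2 := by
    rw [orbitSum_zero_zero, DUAlg.rep_uGen_pow_add_dGen_pow_apply_one_zero (g := g) hε hμ hgu hgd
      (Odd.mul (by decide) hodd), mul_comm 3, pow_mul, hμε]
    linear_combination (ε ^ 2 - 1) * hε
  have hfixed : g (orbitSum n (3 * n) 0 0) = orbitSum n (3 * n) 0 0 :=
    map_orbitSum_eq_self (g := g) hgu hgd (Dvd.intro_left 3 rfl)
  intro heq
  exact two_ne_zero <| htwo.symm.trans <|
    map_apply_one_zero_eq_zero_of_mem_adjoin _ hzero (heq.subset hfixed)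
end
end

section
/- Suppose n is odd. Then the fixed subring A^G is generated as a ℂ-algebra by the orbit sums of degrees n, 2n, 3n and 4n; that is, A^G equals the ℂ-subalgebra of A generated by the set {O(a,b,c) : a, b, c ≥ 0, a+2b+c ∈ {n, 2n, 3n, 4n}}. (This is the upper bound β(g) ≤ 4n for the action on the down-up algebra A(0,1).) -/
/-!
Write `W` for the span of `u` and `d`, so that `g ∘ g` is multiplication by `λ ^ m` on `W ^ m`.
Comparing eigenspaces, a fixed element lies in the sum of the `W ^ (n * k)`, and it is half its own
trace under `T a = a + g a`. The orbit sums are the traces of the monomials `u^a (du)^b d^c`, so it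
suffices to show that `T` maps `W ^ (n * k)`, for `k ≥ 5`, into any subalgebra `B` that contains the
traces from lower degrees.

Modulo `B`, the identity `T a * T b = T (a * b) + T (a * g b)` allows `g` to be applied to a middle
factor without changing the trace of a product. Hence `T (z * r) ∈ B` whenever `z` is central of
degree `2 * n`. Since `u ^ 2` and `d ^ 2` are central, every word is a product of squares of letters
times a word in which `u` and `d` alternate. If there are fewer than `n` squares, the alternating
word has length at least `3 * n`, and applying `g`, which interchanges the two letters up to
scalars, to its factor in positions `n, …, 3 * n - 1` makes the first `2 * n` letters a palindrome
of even length, which collapses to a product of `n` squares.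
-/

/-!
Setting: `lam n = exp(2πi/n)` is a primitive `n`-th root of unity in `ℂ`.
`DUAlg` is the graded down-up algebra `A(0,1) = ℂ⟨u,d⟩/(d²u - ud², du² - u²d)`,
with generators `uGen`, `dGen`.  The automorphism `g` (of order `2n`) is
determined by `g u = d`, `g d = lam n • u`, and generates the cyclic group `G`,
so that the fixed subring `A^G` is `{a | g a = a}`.  The orbit sum is
`orbitSum n a b c = u^a (du)^b d^c + (lam n)^(b+c) • (d^a (ud)^b u^c)`.
-/

noncomputable section

section AlternatingProducts

variable {M : Type*} [Monoid M]

/-- The alternating product `x s * x (s + 1) * x s * ⋯` with `ℓ` factors. The two letters are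
indexed by `ZMod 2`, so that the factor in position `i` is `x (s + i)`. -/
def altProd (x : ZMod 2 → M) : ZMod 2 → ℕ → M
  | _, 0 => 1
  | s, ℓ + 1 => x s * altProd x (s + 1) ℓ

variable (x : ZMod 2 → M)

@[simp]
theorem altProd_zero (s : ZMod 2) : altProd x s 0 = 1 := rfl

theorem altProd_succ (s : ZMod 2) (ℓ : ℕ) : altProd x s (ℓ + 1) = x s * altProd x (s + 1) ℓ := rfl

theorem altProd_add (s : ZMod 2) (ℓ m : ℕ) :
    altProd x s (ℓ + m) = altProd x s ℓ * altProd x (s + ℓ) m := by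
  induction ℓ generalizing s with
  | zero => simp
  | succ ℓ ih =>
    rw [Nat.add_right_comm, altProd_succ, ih, altProd_succ, mul_assoc, Nat.cast_succ,
      add_assoc s, add_comm (1 : ZMod 2)]

theorem altProd_succ' (s : ZMod 2) (ℓ : ℕ) :
    altProd x s (ℓ + 1) = altProd x s ℓ * x (s + ℓ) := by
  rw [altProd_add, altProd_succ, altProd_zero, mul_one]

theorem altProd_add_two_mul (s : ZMod 2) (ℓ m : ℕ) :
    altProd x s (2 * ℓ + m) = altProd x s (2 * ℓ) * altProd x s m := by
  have heven : ((2 * ℓ : ℕ) : ZMod 2) = 0 := (ZMod.natCast_eq_zero_iff_even).2 (even_two_mul ℓ)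
  rw [altProd_add, heven, add_zero]

theorem altProd_two_mul (s : ZMod 2) (ℓ : ℕ) :
    altProd x s (2 * ℓ) = (x s * x (s + 1)) ^ ℓ := by
  induction ℓ with
  | zero => simp
  | succ ℓ ih =>
    rw [mul_add_one, altProd_add_two_mul, ih, pow_succ, altProd_succ, altProd_succ, altProd_zero,
      mul_one]

variable {x}

/-- The word is a palindrome of even length, so it collapses from the middle outwards. -/
theorem altProd_mul_altProd_mem_center (hx : ∀ s, x s ^ 2 ∈ Submonoid.center M) (s : ZMod 2)
    (ℓ : ℕ) : altProd x s ℓ * altProd x (s + ℓ + 1) ℓ ∈ Submonoid.center M := by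
  induction ℓ generalizing s with
  | zero => simp
  | succ ℓ ih =>
    have hfirst : s + (ℓ + 1 : ℕ) + 1 = s + 1 + ℓ + 1 := by push_cast; ring
    have hlast : s + 1 + ℓ + 1 + ℓ = s := by grind
    have hmid := Submonoid.mem_center_iff.1 (ih (s + 1)) (x s)
    have hcollapse : altProd x s (ℓ + 1) * altProd x (s + (ℓ + 1 : ℕ) + 1) (ℓ + 1) =
        altProd x (s + 1) ℓ * altProd x (s + 1 + ℓ + 1) ℓ * x s ^ 2 := by
      rw [hfirst, altProd_succ, altProd_succ', hlast, pow_two, ← mul_assoc _ (x s), ← hmid]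
      simp only [mul_assoc]
    exact hcollapse ▸ mul_mem (ih (s + 1)) (hx s)

open scoped Pointwise

variable (x) in
/-- The words of degree `m` of the form `z * altProd x s ℓ` with `z` a product of squares of
letters. When these squares are central, every word of degree `m` is of this form. -/
def normalWords (m : ℕ) : Set M :=
  {w | ∃ e ℓ, 2 * e + ℓ = m ∧ ∃ z ∈ Set.range (fun s => x s ^ 2) ^ e, ∃ s, w = z * altProd x s ℓ}

theorem mem_center_of_mem_range_sq_pow (hx : ∀ s, x s ^ 2 ∈ Submonoid.center M) {e : ℕ} {z : M}
    (hz : z ∈ Set.range (fun s => x s ^ 2) ^ e) : z ∈ Submonoid.center M :=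
  Submonoid.pow_subset (Set.range_subset_iff.2 hx) hz

theorem mul_mem_normalWords (hx : ∀ s, x s ^ 2 ∈ Submonoid.center M) {m : ℕ} {w : M}
    (hw : w ∈ normalWords x m) (t : ZMod 2) : x t * w ∈ normalWords x (m + 1) := by
  obtain ⟨e, ℓ, rfl, z, hz, s, rfl⟩ := hw
  have hcomm : x t * (z * altProd x s ℓ) = z * (x t * altProd x s ℓ) := by
    rw [← mul_assoc, Submonoid.mem_center_iff.1 (mem_center_of_mem_range_sq_pow hx hz), mul_assoc]
  rw [hcomm]
  obtain rfl | rfl : s = t ∨ s = t + 1 := by clear hcomm; decide +revert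
  · cases ℓ with
    | zero => exact ⟨e, 1, rfl, z, hz, s, rfl⟩
    | succ ℓ =>
      refine ⟨e + 1, ℓ, by ring, z * x s ^ 2, ?_, s + 1, ?_⟩
      · rw [pow_succ]
        exact Set.mul_mem_mul hz (Set.mem_range_self s)
      rw [altProd_succ, pow_two]
      simp only [mul_assoc]
  · exact ⟨e, ℓ + 1, rfl, z, hz, t, rfl⟩

end AlternatingProducts

section Grading

open scoped Pointwise

variable {K A : Type*} [CommSemiring K] [Semiring A] [Algebra K A] {x : ZMod 2 → A}

theorem altProd_mem_span_pow (s : ZMod 2) (ℓ : ℕ) :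
    altProd x s ℓ ∈ Submodule.span K (Set.range x) ^ ℓ := by
  induction ℓ generalizing s with
  | zero => exact pow_zero (Submodule.span K (Set.range x)) ▸ Submodule.one_le.1 le_rfl
  | succ ℓ ih =>
    rw [pow_succ']
    exact Submodule.mul_mem_mul (Submodule.subset_span ⟨s, rfl⟩) (ih _)

theorem mem_span_pow_of_mem_range_sq_pow {e : ℕ} {z : A}
    (hz : z ∈ Set.range (fun s => x s ^ 2) ^ e) :
    z ∈ Submodule.span K (Set.range x) ^ (2 * e) := by
  have hsq : Set.range (fun s => x s ^ 2) ⊆ (Submodule.span K (Set.range x) ^ 2 : Submodule K A) :=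
    Set.range_subset_iff.2 fun s =>
      Submodule.pow_mem_pow _ (Submodule.subset_span (Set.mem_range_self s)) 2
  rw [pow_mul]
  exact Submodule.pow_subset_pow _ (Set.pow_subset_pow_left hsq hz)

theorem span_pow_le_span_normalWords (hx : ∀ s, x s ^ 2 ∈ Submonoid.center A) (m : ℕ) :
    Submodule.span K (Set.range x) ^ m ≤ Submodule.span K (normalWords x m) := by
  induction m with
  | zero =>
    rw [pow_zero, Submodule.one_le]
    exact Submodule.subset_span ⟨0, 0, rfl, 1, by simp, 0, by simp⟩
  | succ m ih =>
    rw [pow_succ']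
    refine (mul_le_mul' le_rfl ih).trans ?_
    rw [Submodule.span_mul_span, Submodule.span_le]
    rintro _ ⟨_, ⟨t, rfl⟩, w, hw, rfl⟩
    exact Submodule.subset_span (mul_mem_normalWords hx hw t)

theorem iSup_span_pow_eq_top {S : Set A} (hS : Algebra.adjoin K S = ⊤) :
    ⨆ m : ℕ, Submodule.span K S ^ m = ⊤ := by
  rw [eq_top_iff, ← Algebra.top_toSubmodule, ← hS, Algebra.adjoin_eq_span, Submodule.span_le]
  intro w hw
  obtain ⟨m, hm⟩ : ∃ m, w ∈ Submodule.span K S ^ m := by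
    induction hw using Submonoid.closure_induction_left with
    | one => exact ⟨0, pow_zero (Submodule.span K S) ▸ Submodule.one_le.1 le_rfl⟩
    | mul_left s hs w _ ih =>
      obtain ⟨m, hm⟩ := ih
      exact ⟨m + 1, pow_succ' (Submodule.span K S) m ▸
        Submodule.mul_mem_mul (Submodule.subset_span hs) hm⟩
  exact Submodule.mem_iSup_of_mem m hm

theorem map_eq_pow_smul_of_mem_pow_s18 {W : Submodule K A} {f : A →ₐ[K] A} {μ : K}
    (hf : ∀ a ∈ W, f a = μ • a) {m : ℕ} {a : A} (ha : a ∈ W ^ m) : f a = μ ^ m • a := by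
  induction ha using Submodule.pow_induction_on_left' with
  | algebraMap r => simp
  | add a b m _ _ ha hb => rw [map_add, ha, hb, smul_add]
  | mem_mul a ha m b _ hb => rw [map_mul, hf a ha, hb, smul_mul_smul_comm, ← pow_succ']

end Grading

theorem mem_iSup_pow_of_map_eq_self {K A : Type*} [Field K] [Ring A] [Algebra K A]
    {W : Submodule K A} (hW : ⨆ m : ℕ, W ^ m = ⊤) {f : A →ₐ[K] A} {μ : K}
    (hf : ∀ a ∈ W, f a = μ • a) {n : ℕ} (hμ : IsPrimitiveRoot μ n) {a : A} (ha : f a = a) :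
    a ∈ ⨆ k : ℕ, (W ^ n) ^ k := by
  let E := Module.End.eigenspace f.toLinearMap
  have hE {b : A} : b ∈ E 1 ↔ f b = b := by simp [E]
  have hle : ⨆ k : ℕ, (W ^ n) ^ k ≤ E 1 := iSup_le fun k b hb => by
    rw [← pow_mul] at hb
    rw [hE, map_eq_pow_smul_of_mem_pow_s18 hf hb, pow_mul, hμ.pow_eq_one, one_pow, one_smul]
  have htop : (⨆ k : ℕ, (W ^ n) ^ k) ⊔ ⨆ ν ≠ 1, E ν = ⊤ := by
    refine top_unique (hW ▸ iSup_le fun m => ?_)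
    by_cases hm : n ∣ m
    · obtain ⟨k, rfl⟩ := hm
      exact pow_mul W n k ▸ le_sup_of_le_left (le_iSup (fun k : ℕ => (W ^ n) ^ k) k)
    · refine le_sup_of_le_right (le_iSup₂_of_le (μ ^ m) (mt (hμ.dvd_of_pow_eq_one m) hm) ?_)
      exact fun b hb => Module.End.mem_eigenspace_iff.2 (map_eq_pow_smul_of_mem_pow_s18 hf hb)
  obtain ⟨b, hb, c, hc, rfl⟩ := Submodule.mem_sup.1 (htop ▸ Submodule.mem_top (x := a))
  have hc1 : c ∈ E 1 := by simpa using sub_mem (hE.2 ha) (hle hb)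
  have hc0 : c = 0 :=
    Submodule.disjoint_def.1 (Module.End.eigenspaces_iSupIndep f.toLinearMap 1) c hc1 hc
  rwa [hc0, add_zero]

section Trace

variable {K A : Type*} [CommRing K] [Ring A] [Algebra K A]

/-- The map `a ↦ a + g a`; on the elements fixed by `g ∘ g` it is the trace (orbit sum) of `g`. -/
def traceMap (g : A ≃ₐ[K] A) : A →ₗ[K] A := LinearMap.id + g.toLinearMap

variable {g : A ≃ₐ[K] A}

theorem traceMap_apply (a : A) : traceMap g a = a + g a := rfl

theorem traceMap_map {a : A} (ha : g (g a) = a) : traceMap g (g a) = traceMap g a := by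
  rw [traceMap_apply, ha, add_comm, traceMap_apply]

theorem map_traceMap {a : A} (ha : g (g a) = a) : g (traceMap g a) = traceMap g a := by
  rw [traceMap_apply, map_add, ha, add_comm]

theorem traceMap_mul_traceMap (a : A) {b : A} (hb : g (g b) = b) :
    traceMap g a * traceMap g b = traceMap g (a * b) + traceMap g (a * g b) := by
  simp only [traceMap_apply, map_mul, hb]
  noncomm_ring

theorem map_mem_pow_s18 {V : Submodule K A} (hV : ∀ a ∈ V, g a ∈ V) {i : ℕ} {a : A} (ha : a ∈ V ^ i) :
    g a ∈ V ^ i := by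
  have hle : (V ^ i).map g.toAlgHom.toLinearMap ≤ V ^ i := by
    rw [Submodule.map_pow]
    exact pow_le_pow_left' (Submodule.map_le_iff_le_comap.2 hV) i
  exact hle (Submodule.mem_map_of_mem ha)

variable {V : Submodule K A} (hV : ∀ a ∈ V, g a ∈ V) (hgg : ∀ a ∈ V, g (g a) = a)
  {B : Subalgebra K A} {k : ℕ} (hB : ∀ i < k, ∀ a ∈ V ^ i, traceMap g a ∈ B)

include hgg in
theorem map_map_eq_self_of_mem_pow {i : ℕ} {a : A} (ha : a ∈ V ^ i) : g (g a) = a := by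
  simpa using map_eq_pow_smul_of_mem_pow_s18 (f := (g.trans g).toAlgHom) (μ := (1 : K))
    (by simpa using hgg) ha

include hgg hB in
theorem traceMap_mul_add_traceMap_mul_map_mem {i j : ℕ} (hi : 0 < i) (hj : 0 < j) (hk : i + j = k)
    {a b : A} (ha : a ∈ V ^ i) (hb : b ∈ V ^ j) :
    traceMap g (a * b) + traceMap g (a * g b) ∈ B := by
  rw [← traceMap_mul_traceMap a (map_map_eq_self_of_mem_pow hgg hb)]
  exact B.mul_mem (hB i (by omega) a ha) (hB j (by omega) b hb)

include hV hgg hB in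
theorem traceMap_mul_mul_sub_traceMap_mul_map_mul_mem {i j l : ℕ} (hi : 0 < i) (hj : 0 < j)
    (hl : 0 < l) (hk : i + j + l = k) {a b c : A} (ha : a ∈ V ^ i) (hb : b ∈ V ^ j)
    (hc : c ∈ V ^ l) : traceMap g (a * b * c) - traceMap g (a * g b * c) ∈ B := by
  have hleft : traceMap g (a * (b * c)) + traceMap g (a * g (b * c)) ∈ B :=
    traceMap_mul_add_traceMap_mul_map_mem hgg hB hi (by omega) (by omega) ha
      (pow_add V j l ▸ Submodule.mul_mem_mul hb hc)
  have hright : traceMap g (a * g b * c) + traceMap g (a * g b * g c) ∈ B :=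
    traceMap_mul_add_traceMap_mul_map_mem hgg hB (by omega) hl hk
      (pow_add V i j ▸ Submodule.mul_mem_mul ha (map_mem_pow_s18 hV hb)) hc
  rw [map_mul g b c, ← mul_assoc, ← mul_assoc] at hleft
  simpa only [add_sub_add_right_eq_sub] using B.sub_mem hleft hright

include hV hgg hB in
/-- Moving `z` through the middle gives `T (z * r) ≡ T (g z * r)` modulo `B`, where `T` is the
trace, while `T (g z) * T r ∈ B` gives `T (z * r) ≡ - T (g z * r)`. -/
theorem traceMap_mul_mem_of_mem_center (h2 : IsUnit (2 : K)) {i j : ℕ} (hi : 0 < i)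
    (hk : i + (j + 2) = k) {z r : A} (hz : z ∈ Submonoid.center A) (hzV : z ∈ V ^ i)
    (hr : r ∈ V ^ (j + 2)) : traceMap g (z * r) ∈ B := by
  rw [pow_succ'] at hr
  induction hr using Submodule.mul_induction_on' with
  | mem_mul_mem a ha b hb =>
    have hab : a * b ∈ V ^ (j + 2) := pow_succ' V (j + 1) ▸ Submodule.mul_mem_mul ha hb
    have hzr : z * (a * b) ∈ V ^ (i + (j + 2)) := pow_add V i _ ▸ Submodule.mul_mem_mul hzV hab
    have hgz : g z ∈ Submonoid.center A := MulEquivClass.apply_mem_center g hz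
    have hsub : traceMap g (z * (a * b)) - traceMap g (g z * (a * b)) ∈ B := by
      have h := traceMap_mul_mul_sub_traceMap_mul_map_mul_mem hV hgg hB one_pos hi (Nat.succ_pos j)
        (by omega) ((pow_one V).symm ▸ ha) hzV hb
      rwa [Submonoid.mem_center_iff.1 hz, Submonoid.mem_center_iff.1 hgz, mul_assoc, mul_assoc] at h
    have hadd : traceMap g (g z * (a * b)) + traceMap g (z * (a * b)) ∈ B := by
      have h := traceMap_mul_add_traceMap_mul_map_mem hgg hB hi (by omega) hk
        (map_mem_pow_s18 hV hzV) hab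
      rwa [← map_mul, traceMap_map (map_map_eq_self_of_mem_pow hgg hzr)] at h
    have htwo : (2 : K) • traceMap g (z * (a * b)) ∈ B := by
      rw [two_smul]
      simpa only [← add_assoc, sub_add_cancel] using B.add_mem hsub hadd
    exact (Submodule.smul_mem_iff_of_isUnit (Subalgebra.toSubmodule B) h2).1 htwo
  | add a _ b _ ha hb =>
    rw [mul_add, map_add]
    exact B.add_mem ha hb

end Trace

section SwappedGenerators

open scoped Pointwise

variable {K A : Type*} [CommRing K] [Ring A] [Algebra K A] {x : ZMod 2 → A} {g : A ≃ₐ[K] A}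
  (hg : ∀ s, ∃ c : K, g (x s) = c • x (s + 1))

include hg

theorem exists_map_altProd_eq_smul (s : ZMod 2) (ℓ : ℕ) :
    ∃ c : K, g (altProd x s ℓ) = c • altProd x (s + 1) ℓ := by
  induction ℓ generalizing s with
  | zero => exact ⟨1, by simp⟩
  | succ ℓ ih =>
    obtain ⟨c, hc⟩ := hg s
    obtain ⟨c', hc'⟩ := ih (s + 1)
    exact ⟨c * c', by rw [altProd_succ, map_mul, hc, hc', smul_mul_smul_comm, altProd_succ]⟩

theorem map_mem_span_range {a : A} (ha : a ∈ Submodule.span K (Set.range x)) :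
    g a ∈ Submodule.span K (Set.range x) := by
  refine (Submodule.span_le (p := (Submodule.span K (Set.range x)).comap g.toLinearMap)).2 ?_ ha
  rintro _ ⟨s, rfl⟩
  obtain ⟨c, hc⟩ := hg s
  change g (x s) ∈ Submodule.span K (Set.range x)
  exact hc ▸ Submodule.smul_mem _ c (Submodule.subset_span ⟨s + 1, rfl⟩)

variable (hx : ∀ s, x s ^ 2 ∈ Submonoid.center A) (h2 : IsUnit (2 : K)) {n : ℕ}
  (hgg : ∀ a ∈ Submodule.span K (Set.range x) ^ n, g (g a) = a) {B : Subalgebra K A}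

include h2 hgg

theorem traceMap_center_mul_mem {j : ℕ}
    (hB : ∀ i < j + 5, ∀ a ∈ (Submodule.span K (Set.range x) ^ n) ^ i, traceMap g a ∈ B) {z r : A}
    (hz : z ∈ Submonoid.center A) (hzW : z ∈ Submodule.span K (Set.range x) ^ (2 * n))
    (hr : r ∈ Submodule.span K (Set.range x) ^ (n * (j + 3))) : traceMap g (z * r) ∈ B :=
  traceMap_mul_mem_of_mem_center (fun _ => map_mem_pow_s18 fun _ => map_mem_span_range hg) hgg hB h2
    two_pos (by omega) hz (by rwa [← pow_mul, mul_comm n])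
    (show r ∈ _ ^ (j + 1 + 2) by rwa [← pow_mul])

include hx

/-- Applying `g` to the last `2 * n` letters of the alternating word turns its first `2 * n` letters
into a palindrome, which is central. -/
theorem traceMap_altProd_mul_mem {j : ℕ}
    (hB : ∀ i < j + 5, ∀ a ∈ (Submodule.span K (Set.range x) ^ n) ^ i, traceMap g a ∈ B)
    (s : ZMod 2) {r : A} (hr : r ∈ Submodule.span K (Set.range x) ^ (n * (j + 2))) :
    traceMap g (altProd x s (n + 2 * n) * r) ∈ B := by
  set p := altProd x s n
  set m := altProd x (s + n) (2 * n)
  have hp : p ∈ Submodule.span K (Set.range x) ^ n := altProd_mem_span_pow s n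
  have hm : m ∈ Submodule.span K (Set.range x) ^ (2 * n) := altProd_mem_span_pow _ _
  have hswap : traceMap g (p * m * r) - traceMap g (p * g m * r) ∈ B :=
    traceMap_mul_mul_sub_traceMap_mul_map_mul_mem
      (fun _ => map_mem_pow_s18 fun _ => map_mem_span_range hg) hgg hB
      one_pos two_pos (Nat.succ_pos (j + 1)) (by omega) (by rwa [pow_one])
      (by rwa [← pow_mul, mul_comm n]) (by rwa [← pow_mul])
  have hcollapsed : traceMap g (p * g m * r) ∈ B := by
    obtain ⟨c, hc⟩ := exists_map_altProd_eq_smul hg (s + n) (2 * n)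
    set q := altProd x (s + n + 1) n
    set t := altProd x (s + n + 1 + n) n
    have hq : q ∈ Submodule.span K (Set.range x) ^ n := altProd_mem_span_pow _ n
    have ht : t ∈ Submodule.span K (Set.range x) ^ n := altProd_mem_span_pow _ n
    have hfactor : p * g m * r = c • (p * q * (t * r)) := by
      rw [hc, two_mul, altProd_add]
      simp only [mul_smul_comm, smul_mul_assoc, mul_assoc, q, t]
    rw [hfactor, map_smul]
    refine B.smul_mem (traceMap_center_mul_mem hg h2 hgg hB
      (altProd_mul_altProd_mem_center hx s n) ?_ ?_) c
    · exact two_mul n ▸ pow_add (Submodule.span K (Set.range x)) n n ▸ Submodule.mul_mem_mul hp hq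
    · rw [show n * (j + 3) = n + n * (j + 2) by ring, pow_add]
      exact Submodule.mul_mem_mul ht hr
  rw [altProd_add]
  simpa only [sub_add_cancel] using B.add_mem hswap hcollapsed

theorem traceMap_mem_of_mem_normalWords {j : ℕ}
    (hB : ∀ i < j + 5, ∀ a ∈ (Submodule.span K (Set.range x) ^ n) ^ i, traceMap g a ∈ B)
    {w : A} (hw : w ∈ normalWords x (n * (j + 5))) : traceMap g w ∈ B := by
  obtain ⟨e, ℓ, hdeg, z, hz, s, rfl⟩ := hw
  rcases le_total n e with hne | hen
  · obtain ⟨e, rfl⟩ := Nat.exists_eq_add_of_le hne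
    rw [pow_add] at hz
    obtain ⟨z₁, hz₁, z₂, hz₂, rfl⟩ := hz
    have hrest : z₂ * altProd x s ℓ ∈ Submodule.span K (Set.range x) ^ (n * (j + 3)) := by
      rw [show n * (j + 3) = 2 * e + ℓ by linarith, pow_add]
      exact Submodule.mul_mem_mul (mem_span_pow_of_mem_range_sq_pow hz₂) (altProd_mem_span_pow s ℓ)
    rw [mul_assoc z₁ z₂]
    exact traceMap_center_mul_mem hg h2 hgg hB (mem_center_of_mem_range_sq_pow hx hz₁)
      (mem_span_pow_of_mem_range_sq_pow hz₁) hrest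
  · obtain ⟨l, rfl⟩ : ∃ l, ℓ = n + 2 * n + l := Nat.exists_eq_add_of_le (by nlinarith)
    rw [← Submonoid.mem_center_iff.1 (mem_center_of_mem_range_sq_pow hx hz), altProd_add, mul_assoc]
    refine traceMap_altProd_mul_mem hg hx h2 hgg hB s ?_
    rw [show n * (j + 2) = l + 2 * e by linarith, pow_add]
    exact Submodule.mul_mem_mul (altProd_mem_span_pow _ l) (mem_span_pow_of_mem_range_sq_pow hz)

theorem traceMap_mem_of_forall_le_four
    (hB : ∀ k ≤ 4, ∀ a ∈ (Submodule.span K (Set.range x) ^ n) ^ k, traceMap g a ∈ B) (k : ℕ) :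
    ∀ a ∈ (Submodule.span K (Set.range x) ^ n) ^ k, traceMap g a ∈ B := by
  induction k using Nat.strong_induction_on with
  | _ k ih =>
    rcases le_or_gt k 4 with hk | hk
    · exact hB k hk
    · obtain ⟨j, rfl⟩ := Nat.exists_eq_add_of_le' (Nat.succ_le_of_lt hk)
      rw [← pow_mul]
      refine fun a ha => (Submodule.span_le (p := B.toSubmodule.comap (traceMap g))).2 ?_
        (span_pow_le_span_normalWords hx _ ha)
      exact fun w hw => traceMap_mem_of_mem_normalWords hg hx h2 hgg ih hw

end SwappedGenerators

section DownUp

open scoped Pointwise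

/-- The generators of the down-up algebra as a family indexed by `ZMod 2`, with `u` in position `0`
and `d` in position `1`. -/
def duGen (s : ZMod 2) : DUAlg := if s = 0 then uGen else dGen

@[simp]
theorem duGen_zero : duGen 0 = uGen := rfl

@[simp]
theorem duGen_one : duGen 1 = dGen := rfl

theorem zmod_two_cases (s : ZMod 2) : s = 0 ∨ s = 1 := by
  decide +revert

theorem adjoin_range_duGen : Algebra.adjoin ℂ (Set.range duGen) = ⊤ := by
  have hrange : Set.range duGen =
      RingQuot.mkAlgHom ℂ DownUpRel '' Set.range (FreeAlgebra.ι ℂ) := by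
    rw [← Set.range_comp]
    congr 1
    funext s
    fin_cases s <;> rfl
  rw [hrange, ← AlgHom.map_adjoin, FreeAlgebra.adjoin_range_ι, Algebra.map_top,
    AlgHom.range_eq_top]
  exact RingQuot.mkAlgHom_surjective ℂ DownUpRel

theorem duGen_sq_mem_center (s : ZMod 2) : duGen s ^ 2 ∈ Submonoid.center DUAlg := by
  have hdd : dGen * dGen * uGen = uGen * dGen * dGen := by
    simpa only [map_mul, uGen, dGen] using RingQuot.mkAlgHom_rel ℂ DownUpRel.rel1
  have huu : dGen * uGen * uGen = uGen * uGen * dGen := by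
    simpa only [map_mul, uGen, dGen] using RingQuot.mkAlgHom_rel ℂ DownUpRel.rel2
  have hgen : ∀ b ∈ Set.range duGen, Commute (duGen s ^ 2) b := by
    rintro _ ⟨t, rfl⟩
    rcases zmod_two_cases s with rfl | rfl <;> rcases zmod_two_cases t with rfl | rfl
    · exact (Commute.refl _).pow_left 2
    · simp only [commute_iff_eq, duGen_zero, duGen_one, pow_two, ← mul_assoc, huu]
    · simp only [commute_iff_eq, duGen_zero, duGen_one, pow_two, ← mul_assoc, hdd]
    · exact (Commute.refl _).pow_left 2
  refine Submonoid.mem_center_iff.2 fun a => ?_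
  have ha : a ∈ Algebra.adjoin ℂ (Set.range duGen) := adjoin_range_duGen ▸ Algebra.mem_top
  exact (Algebra.commute_of_mem_adjoin_of_forall_mem_commute ha hgen).symm

theorem exists_altProd_duGen_eq (s : ZMod 2) (ℓ : ℕ) : ∃ a b c : ℕ, a + 2 * b + c = ℓ ∧
    altProd duGen s ℓ = uGen ^ a * (dGen * uGen) ^ b * dGen ^ c := by
  have hpair : duGen 1 * duGen (1 + 1) = dGen * uGen := rfl
  have hone (ℓ : ℕ) : ∃ b c : ℕ, 2 * b + c = ℓ ∧
      altProd duGen 1 ℓ = (dGen * uGen) ^ b * dGen ^ c := by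
    rcases Nat.even_or_odd' ℓ with ⟨b, rfl | rfl⟩
    · exact ⟨b, 0, rfl, by rw [altProd_two_mul, hpair, pow_zero, mul_one]⟩
    · exact ⟨b, 1, rfl, by rw [altProd_add_two_mul, altProd_two_mul, hpair, altProd_succ,
        altProd_zero, mul_one, pow_one, duGen_one]⟩
  rcases zmod_two_cases s with rfl | rfl
  · cases ℓ with
    | zero => exact ⟨0, 0, 0, rfl, by simp⟩
    | succ ℓ =>
      obtain ⟨b, c, rfl, h⟩ := hone ℓ
      exact ⟨1, b, c, by ring, by rw [altProd_succ, zero_add, h, duGen_zero, pow_one, mul_assoc]⟩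
  · obtain ⟨b, c, rfl, h⟩ := hone ℓ
    exact ⟨0, b, c, by ring, by rw [h, pow_zero, one_mul]⟩

theorem exists_eq_of_mem_normalWords_duGen {m : ℕ} {w : DUAlg} (hw : w ∈ normalWords duGen m) :
    ∃ a b c : ℕ, a + 2 * b + c = m ∧ w = uGen ^ a * (dGen * uGen) ^ b * dGen ^ c := by
  obtain ⟨e, ℓ, rfl, z, hz, s, rfl⟩ := hw
  induction e generalizing z with
  | zero =>
    obtain rfl : z = 1 := by simpa using hz
    simpa only [mul_zero, zero_add, one_mul] using exists_altProd_duGen_eq s ℓ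
  | succ e ih =>
    rw [pow_succ'] at hz
    obtain ⟨_, ⟨t, rfl⟩, z, hz, rfl⟩ := hz
    obtain ⟨a, b, c, habc, h⟩ := ih z hz
    simp only [mul_assoc _ z, h]
    rcases zmod_two_cases t with rfl | rfl
    · refine ⟨a + 2, b, c, by omega, ?_⟩
      rw [add_comm a, pow_add, duGen_zero]
      simp only [mul_assoc]
    · refine ⟨a, b, c + 2, by omega, ?_⟩
      rw [← Submonoid.mem_center_iff.1 (duGen_sq_mem_center 1), pow_add, duGen_one]
      simp only [mul_assoc]

theorem monomial_mem_span_pow (a b c : ℕ) : uGen ^ a * (dGen * uGen) ^ b * dGen ^ c ∈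
    Submodule.span ℂ (Set.range duGen) ^ (a + 2 * b + c) := by
  have hu : uGen ∈ Submodule.span ℂ (Set.range duGen) := Submodule.subset_span ⟨0, rfl⟩
  have hd : dGen ∈ Submodule.span ℂ (Set.range duGen) := Submodule.subset_span ⟨1, rfl⟩
  rw [pow_add, pow_add, pow_mul, pow_two]
  exact Submodule.mul_mem_mul (Submodule.mul_mem_mul (Submodule.pow_mem_pow _ hu a)
    (Submodule.pow_mem_pow _ (Submodule.mul_mem_mul hd hu) b)) (Submodule.pow_mem_pow _ hd c)

theorem isPrimitiveRoot_lam {n : ℕ} (hn : n ≠ 0) : IsPrimitiveRoot (lam n) n :=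
  Complex.isPrimitiveRoot_exp n hn

variable {n : ℕ} {g : DUAlg ≃ₐ[ℂ] DUAlg} (hgu : g uGen = dGen) (hgd : g dGen = lam n • uGen)

include hgu hgd

theorem exists_map_duGen_eq_smul (s : ZMod 2) : ∃ c : ℂ, g (duGen s) = c • duGen (s + 1) := by
  rcases zmod_two_cases s with rfl | rfl
  · exact ⟨1, by rw [duGen_zero, hgu, one_smul]; rfl⟩
  · exact ⟨lam n, hgd⟩

theorem map_map_eq_lam_smul {a : DUAlg} (ha : a ∈ Submodule.span ℂ (Set.range duGen)) :
    g (g a) = lam n • a := by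
  induction ha using Submodule.span_induction with
  | mem a ha =>
    obtain ⟨s, rfl⟩ := ha
    rcases zmod_two_cases s with rfl | rfl
    · rw [duGen_zero, hgu, hgd]
    · rw [duGen_one, hgd, map_smul, hgu]
  | zero => simp
  | add a b _ _ ha hb => simp only [map_add, ha, hb, smul_add]
  | smul r a _ ha => simp only [map_smul, ha, smul_comm r]

theorem map_map_eq_self_of_mem_span_pow (hn : n ≠ 0) {a : DUAlg}
    (ha : a ∈ Submodule.span ℂ (Set.range duGen) ^ n) : g (g a) = a := by
  have h : g (g a) = lam n ^ n • a := map_eq_pow_smul_of_mem_pow_s18 (f := (g.trans g).toAlgHom)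
    (fun _ => map_map_eq_lam_smul hgu hgd) ha
  rwa [(isPrimitiveRoot_lam hn).pow_eq_one, one_smul] at h

theorem orbitSum_eq_traceMap (a b c : ℕ) :
    orbitSum n a b c = traceMap g (uGen ^ a * (dGen * uGen) ^ b * dGen ^ c) := by
  simp only [orbitSum, traceMap_apply, map_mul, map_pow, hgu, hgd, smul_mul_assoc, mul_smul_comm,
    smul_pow, smul_smul, ← pow_add, add_comm c]

theorem map_orbitSum (hn : n ≠ 0) {a b c : ℕ} (h : n ∣ a + 2 * b + c) :
    g (orbitSum n a b c) = orbitSum n a b c := by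
  obtain ⟨k, hk⟩ := h
  rw [orbitSum_eq_traceMap hgu hgd]
  refine map_traceMap (map_map_eq_self_of_mem_pow
    (fun _ => map_map_eq_self_of_mem_span_pow hgu hgd hn) (i := k) ?_)
  rw [← pow_mul, ← hk]
  exact monomial_mem_span_pow a b c

theorem traceMap_mem_of_forall_orbitSum_mem {B : Subalgebra ℂ DUAlg} {m : ℕ}
    (hB : ∀ a b c : ℕ, a + 2 * b + c = m → orbitSum n a b c ∈ B) {w : DUAlg}
    (hw : w ∈ Submodule.span ℂ (Set.range duGen) ^ m) : traceMap g w ∈ B := by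
  refine (Submodule.span_le (p := B.toSubmodule.comap (traceMap g))).2 ?_
    (span_pow_le_span_normalWords duGen_sq_mem_center m hw)
  intro w hw
  obtain ⟨a, b, c, habc, rfl⟩ := exists_eq_of_mem_normalWords_duGen hw
  exact (orbitSum_eq_traceMap hgu hgd a b c ▸ hB a b c habc :)

theorem mem_of_forall_orbitSum_mem (hn : n ≠ 0) {B : Subalgebra ℂ DUAlg}
    (hB : ∀ a b c : ℕ, (a + 2 * b + c = n ∨ a + 2 * b + c = 2 * n ∨ a + 2 * b + c = 3 * n ∨
      a + 2 * b + c = 4 * n) → orbitSum n a b c ∈ B) {a : DUAlg} (ha : g a = a) : a ∈ B := by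
  have hlow : ∀ k ≤ 4, ∀ w ∈ (Submodule.span ℂ (Set.range duGen) ^ n) ^ k, traceMap g w ∈ B := by
    intro k hk w hw
    rw [← pow_mul] at hw
    refine traceMap_mem_of_forall_orbitSum_mem hgu hgd (fun a b c habc => ?_) hw
    obtain rfl | hk0 := Nat.eq_zero_or_pos k
    · obtain ⟨rfl, rfl, rfl⟩ : a = 0 ∧ b = 0 ∧ c = 0 := by omega
      simpa [orbitSum] using B.add_mem B.one_mem B.one_mem
    · exact hB a b c (by interval_cases k <;> omega)
  have htrace := traceMap_mem_of_forall_le_four (exists_map_duGen_eq_smul hgu hgd)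
    duGen_sq_mem_center (IsUnit.mk0 2 two_ne_zero)
    (fun _ => map_map_eq_self_of_mem_span_pow hgu hgd hn) hlow
  have hmem : a ∈ ⨆ k : ℕ, (Submodule.span ℂ (Set.range duGen) ^ n) ^ k :=
    mem_iSup_pow_of_map_eq_self (f := (g.trans g).toAlgHom)
      (iSup_span_pow_eq_top adjoin_range_duGen) (fun _ => map_map_eq_lam_smul hgu hgd)
      (isPrimitiveRoot_lam hn) (by simp [ha])
  have htwo : (2 : ℂ) • a ∈ B := by
    have h : traceMap g a ∈ B :=
      iSup_le (a := B.toSubmodule.comap (traceMap g)) (fun k => htrace k) hmem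
    rwa [traceMap_apply, ha, ← two_smul ℂ] at h
  exact (Submodule.smul_mem_iff_of_isUnit B.toSubmodule (IsUnit.mk0 2 two_ne_zero)).1 htwo

end DownUp

theorem fixed_eq_adjoin_four_n_of_odd_general (n : ℕ) (hn : n ≠ 0)
    (g : DUAlg ≃ₐ[ℂ] DUAlg) (hgu : g uGen = dGen) (hgd : g dGen = lam n • uGen) :
    {x : DUAlg | g x = x} =
      ↑(Algebra.adjoin ℂ
        {x : DUAlg | ∃ a b c : ℕ,
          (a + 2 * b + c = n ∨ a + 2 * b + c = 2 * n ∨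
           a + 2 * b + c = 3 * n ∨ a + 2 * b + c = 4 * n) ∧ x = orbitSum n a b c}) := by
  apply Set.Subset.antisymm
  · refine fun x hx => mem_of_forall_orbitSum_mem hgu hgd hn (fun a b c h => ?_) hx
    exact Algebra.subset_adjoin ⟨a, b, c, h, rfl⟩
  · refine Algebra.adjoin_le (S := AlgHom.equalizer g.toAlgHom (AlgHom.id ℂ DUAlg)) ?_
    rintro x ⟨a, b, c, h, rfl⟩
    exact map_orbitSum hgu hgd hn (by rcases h with h | h | h | h <;> simp [h])

/-- If `n` is odd then the fixed subring `A^G` of the down-up algebra `A(0,1)`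
is generated as a `ℂ`-algebra by the orbit sums of degrees `n`, `2n`, `3n`, `4n`. -/
theorem fixed_eq_adjoin_four_n_of_odd (n : ℕ) (hodd : Odd n)
    (g : DUAlg ≃ₐ[ℂ] DUAlg) (hgu : g uGen = dGen) (hgd : g dGen = lam n • uGen) :
    {x : DUAlg | g x = x} =
      ↑(Algebra.adjoin ℂ
        {x : DUAlg | ∃ a b c : ℕ,
          (a + 2 * b + c = n ∨ a + 2 * b + c = 2 * n ∨
           a + 2 * b + c = 3 * n ∨ a + 2 * b + c = 4 * n) ∧ x = orbitSum n a b c}) :=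
  fixed_eq_adjoin_four_n_of_odd_general n hodd.pos.ne' g hgu hgd
end
end
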